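/- arXiv:1505.05531 — 7 statements merged into one kernel-verified Lean document; each statement's English description precedes it below -/
import Mathlib

section
/- (Kneser–Lovász theorem) Let n ≥ 2k > 1. The (n,k)-Kneser graph has no proper coloring with n − 2k + 1 colors; that is, there is no map c from the k-element subsets of {1,…,n} to {1,…,n−2k+1} such that disjoint k-subsets always receive different colors. -/
namespace KL
open Finset

def alt : Bool → List ℕ → ZMod 2
  | _, [] => 1
  | s, c :: t => if decide (c % 2 = 0) = s then alt (!s) t else 0

lemma alt_erase (l : List ℕ) (hl : l.Pairwise (· ≤ ·)) : ∀ s : Bool,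
    (l.map (fun a => alt s (l.erase a))).sum = alt s l + alt (!s) l := by
  induction l with
  | nil => intro s; simp [alt]; decide
  | cons c t ih =>
    intro s
    rw [List.pairwise_cons] at hl
    have key : ∀ a ∈ t, (c :: t).erase a = c :: t.erase a := by
      intro a ha
      by_cases h : c = a
      · subst h
        rw [List.erase_cons_head]
        cases t with
        | nil => simp at ha
        | cons b u =>
          have hb : b = c := by
            have h1 := hl.1 b (by simp)
            rcases List.mem_cons.1 ha with h | h
            · exact h.symm
            · have := (List.pairwise_cons.1 hl.2).1 c h
              omega
          subst hb
          rw [List.erase_cons_head]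
      · rw [List.erase_cons_tail]; simpa using h
    have h2 : t.map (fun a => alt s ((c :: t).erase a))
        = t.map (fun a => alt s (c :: t.erase a)) :=
      List.map_congr_left (fun a ha => by rw [key a ha])
    rw [List.map_cons, List.sum_cons, h2, List.erase_cons_head]
    have ih' := ih hl.2 (!s)
    by_cases hc : decide (c % 2 = 0) = s
    · have hc' : ¬ (decide (c % 2 = 0) = !s) := by rw [hc]; cases s <;> simp
      simp only [alt, hc, if_true]
      rw [ih', Bool.not_not, add_comm, add_assoc, CharTwo.add_self_eq_zero]
      simp
    · have hc' : decide (c % 2 = 0) = !s := by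
        revert hc; generalize decide (c % 2 = 0) = b; cases s <;> cases b <;> simp
      simp only [alt, hc', if_true, Bool.not_not]
      simp

def P (s : Bool) (M : Multiset ℕ) : ZMod 2 := alt s (M.sort (· ≤ ·))

lemma P_erase (M : Multiset ℕ) (s : Bool) :
    (M.map (fun a => P s (M.erase a))).sum = P s M + P (!s) M := by
  have h := alt_erase (M.sort (· ≤ ·)) (Multiset.pairwise_sort _ _) s
  unfold P
  rw [← h]
  conv_lhs => rw [← Multiset.sort_eq M (· ≤ ·)]
  rw [Multiset.map_coe, Multiset.sum_coe]
  congr 1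
  apply List.map_congr_left
  intro a ha
  congr 1
  apply List.Perm.eq_of_pairwise' (r := (· ≤ ·)) 
  · exact Multiset.pairwise_sort _ _
  · exact (Multiset.pairwise_sort M (· ≤ ·)).sublist List.erase_sublist
  · rw [← Multiset.coe_eq_coe, Multiset.sort_eq, ← Multiset.coe_erase]

lemma P_erase_finset (T : Finset ℕ) (x : ℕ → ℕ) (s : Bool) :
    ∑ i ∈ T, P s ((T.erase i).val.map x) = P s (T.val.map x) + P (!s) (T.val.map x) := by
  rw [← P_erase, Multiset.map_map]
  apply Finset.sum_congr rfl
  intro i hi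
  simp only [Function.comp]
  rw [Finset.erase_val, Multiset.map_erase_of_mem _ _ hi]

def comp (x : ℕ) : ℕ := if x % 2 = 0 then x + 1 else x - 1

lemma alt_comp (l : List ℕ) : ∀ s, alt s (l.map comp) = alt (!s) l := by
  induction l with
  | nil => intro s; rfl
  | cons c t ih =>
    intro s
    simp only [List.map_cons, alt, ih]
    have : decide (comp c % 2 = 0) = ! decide (c % 2 = 0) := by
      unfold comp
      split_ifs with h
      · simp [h]; omega
      · simp [h]; omega
    rw [this]
    congr 1
    cases s <;> simp

lemma P_comp (M : Multiset ℕ) (hM : ∀ a ∈ M, ∀ b ∈ M, a ≠ comp b) (s : Bool) :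
    P s (M.map comp) = P (!s) M := by
  unfold P
  rw [← alt_comp]
  congr 1
  apply List.Perm.eq_of_pairwise' (r := (· ≤ ·)) 
  · exact Multiset.pairwise_sort _ _
  · rw [List.pairwise_map]
    refine List.Pairwise.imp_of_mem ?_ (Multiset.pairwise_sort M (· ≤ ·))
    intro a b ha hb hab
    rw [Multiset.mem_sort] at ha hb
    have := hM a ha b hb
    have := hM b hb a ha
    unfold comp at *
    split_ifs at * <;> omega
  · rw [← Multiset.coe_eq_coe, Multiset.sort_eq, ← Multiset.map_coe, Multiset.sort_eq]

/-- nonvanishing yields distinct labels. -/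
lemma alt_nodup (l : List ℕ) (hl : l.Pairwise (· ≤ ·)) : ∀ s, alt s l ≠ 0 → l.Nodup := by
  induction l with
  | nil => intros; simp
  | cons c t ih =>
    intro s h
    rw [List.pairwise_cons] at hl
    simp only [alt] at h
    split_ifs at h with hc
    · rw [List.nodup_cons]
      refine ⟨?_, ih hl.2 _ h⟩
      intro hct
      cases t with
      | nil => simp at hct
      | cons b u =>
        have hb : b = c := by
          have h1 := hl.1 b (by simp)
          rcases List.mem_cons.1 hct with h | h
          · exact h.symm
          · have := (List.pairwise_cons.1 hl.2).1 c h
            omega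
        subst hb
        simp only [alt] at h
        rw [hc] at h
        cases s <;> simp at h
    · exact absurd rfl h

variable {n : ℕ}

def A (σ : Equiv.Perm (Fin n) × (Fin n → Bool)) (i : ℕ) : Fin n → Option Bool :=
  fun j => if ((σ.1⁻¹ j : Fin n) : ℕ) ≤ i then some (σ.2 j) else none

def neg (v : Fin n → Option Bool) : Fin n → Option Bool := fun j => (v j).map not

def L (lam : (Fin n → Option Bool) → ℕ) (σ : Equiv.Perm (Fin n) × (Fin n → Bool))
    (T : Finset ℕ) : Multiset ℕ := T.val.map (fun i => lam (A σ i))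

lemma L_congr (lam : (Fin n → Option Bool) → ℕ) {σ τ : Equiv.Perm (Fin n) × (Fin n → Bool)}
    {T : Finset ℕ} (h : ∀ i ∈ T, A σ i = A τ i) : L lam σ T = L lam τ T := by
  unfold L
  apply Multiset.map_congr rfl
  intro i hi
  rw [h i hi]

def G (d : ℕ) (σ : Equiv.Perm (Fin n) × (Fin n → Bool)) : Prop :=
  (∀ j : Fin n, d ≤ j.val → σ.1 j = j) ∧ (∀ j : Fin n, d ≤ j.val → σ.2 j = true)

def H (d : ℕ) (σ : Equiv.Perm (Fin n) × (Fin n → Bool)) : Prop :=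
  (∀ j : Fin n, d + 1 ≤ j.val → σ.1 j = j) ∧ (∀ j : Fin n, d ≤ j.val → σ.2 j = true)

open Classical in
lemma swap_sum (lam : (Fin n → Option Bool) → ℕ) (d : ℕ) (hd : d < n) (i : ℕ) (hi : i < d) :
    ∑ σ ∈ univ.filter (H (n := n) d), P true (L lam σ ((range (d+1)).erase i)) = 0 := by
  set a : Fin n := ⟨i, by omega⟩ with ha
  set b : Fin n := ⟨i + 1, by omega⟩ with hb
  have hab : a ≠ b := by simp [ha, hb]
  refine Finset.sum_involution (fun σ _ => (σ.1 * Equiv.swap a b, σ.2)) ?_ ?_ ?_ ?_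
  · intro σ _
    rw [L_congr lam (σ := (σ.1 * Equiv.swap a b, σ.2)) (τ := σ), CharTwo.add_self_eq_zero]
    intro t ht
    have ht : t ≠ i := (Finset.mem_erase.1 ht).1
    funext j
    simp only [A, mul_inv_rev, Equiv.swap_inv, Equiv.Perm.mul_apply]
    congr 1
    generalize σ.1⁻¹ j = y
    by_cases h1 : y = a
    · subst h1; rw [Equiv.swap_apply_left]; simp [ha, hb]; omega
    · by_cases h2 : y = b
      · subst h2; rw [Equiv.swap_apply_right]; simp [ha, hb]; omega
      · rw [Equiv.swap_apply_of_ne_of_ne h1 h2]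
  · intro σ _ _ h
    have h1 : σ.1 * Equiv.swap a b = σ.1 := congrArg Prod.fst h
    have h2 : Equiv.swap a b = 1 := mul_eq_left.1 h1
    exact hab (Equiv.swap_eq_one_iff.1 h2)
  · intro σ hσ
    simp only [mem_filter, mem_univ, true_and, H] at hσ ⊢
    refine ⟨fun j hj => ?_, hσ.2⟩
    rw [Equiv.Perm.mul_apply, Equiv.swap_apply_of_ne_of_ne]
    · exact hσ.1 j hj
    · intro h; rw [h, ha] at hj; simp at hj; omega
    · intro h; rw [h, hb] at hj; simp at hj; omega
  · intro σ _
    simp [mul_assoc]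

open Classical in
lemma flip_sum (lam : (Fin n → Option Bool) → ℕ) (d : ℕ) (hd : d < n) :
    ∑ σ ∈ (univ.filter (H (n := n) d)).filter (fun σ => ¬ σ.1 ⟨d, hd⟩ = ⟨d, hd⟩),
      P true (L lam σ (range d)) = 0 := by
  set D : Fin n := ⟨d, hd⟩ with hD
  refine Finset.sum_involution
    (fun σ _ => (σ.1, Function.update σ.2 (σ.1 D) (! σ.2 (σ.1 D)))) ?_ ?_ ?_ ?_
  · intro σ _
    rw [L_congr lam (σ := (σ.1, Function.update σ.2 (σ.1 D) (! σ.2 (σ.1 D)))) (τ := σ),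
      CharTwo.add_self_eq_zero]
    intro t ht
    have ht := Finset.mem_range.1 ht
    funext j
    simp only [A]
    split_ifs with h
    · rw [Function.update_of_ne]
      intro hj
      rw [hj] at h
      simp [hD] at h
      omega
    · rfl
  · intro σ _ _ h
    have h1 := congrFun (congrArg Prod.snd h) (σ.1 D)
    simp at h1
  · intro σ hσ
    simp only [mem_filter, mem_univ, true_and, H] at hσ ⊢
    refine ⟨⟨hσ.1.1, fun j hj => ?_⟩, hσ.2⟩
    rw [Function.update_of_ne]
    · exact hσ.1.2 j hj
    · intro h
      by_cases hjd : j = D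
      · exact hσ.2 (by rw [← h, hjd])
      · have : d + 1 ≤ j.val := by
          have : j.val ≠ d := fun h => hjd (Fin.ext h)
          omega
        have h3 := hσ.1.1 j this
        rw [h] at h3
        have := σ.1.injective h3
        rw [← h] at this
        exact hjd this
  · intro σ _
    simp

lemma chain_comp (lam : (Fin n → Option Bool) → ℕ)
    (hcomp : ∀ v w, (∃ j, v j ≠ none) → (∃ j, w j ≠ none) →
      (∀ j, v j ≠ none → w j = v j) → lam v ≠ comp (lam w))
    (σ : Equiv.Perm (Fin n) × (Fin n → Bool)) (i j : ℕ)
    (hi : ∃ t, A σ i t ≠ none) (hj : ∃ t, A σ j t ≠ none) :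
    lam (A σ i) ≠ comp (lam (A σ j)) := by
  have mono : ∀ i j, i ≤ j → ∀ t, A σ i t ≠ none → A σ j t = A σ i t := by
    intro i j hij t ht
    simp only [A] at ht ⊢
    split_ifs at ht ⊢ <;> first | rfl | omega | exact absurd rfl ht
  rcases le_total i j with h | h
  · exact hcomp _ _ hi hj (mono i j h)
  · intro he
    apply hcomp _ _ hj hi (mono j i h)
    rw [he]
    unfold comp
    split_ifs <;> omega

open Classical in
lemma fan (lam : (Fin n → Option Bool) → ℕ)
    (hanti : ∀ v, (∃ j, v j ≠ none) → lam (neg v) = comp (lam v))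
    (hcomp : ∀ v w, (∃ j, v j ≠ none) → (∃ j, w j ≠ none) →
      (∀ j, v j ≠ none → w j = v j) → lam v ≠ comp (lam w))
    (d : ℕ) (hd : d ≤ n) :
    ∑ σ ∈ univ.filter (G (n := n) d), P true (L lam σ (range d)) = 1 := by
  induction d with
  | zero =>
    have : univ.filter (G (n := n) 0) = {(1, fun _ => true)} := by
      ext σ
      simp only [mem_filter, mem_univ, true_and, mem_singleton, G, Nat.zero_le, forall_const]
      constructor
      · rintro ⟨h1, h2⟩
        exact Prod.ext (Equiv.ext h1) (funext h2)
      · rintro rfl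
        simp
    rw [this, Finset.sum_singleton]
    simp [L, P, alt]
  | succ d ih =>
    have hd' : d < n := by omega
    have ih := ih (by omega)
    set D : Fin n := ⟨d, hd'⟩ with hD
    have h1 : ∑ σ ∈ univ.filter (H (n := n) d), ∑ i ∈ range (d+1),
        P true (L lam σ ((range (d+1)).erase i)) = 1 := by
      rw [Finset.sum_comm, Finset.sum_range_succ,
        Finset.sum_eq_zero (fun i hi => swap_sum lam d hd' i (Finset.mem_range.1 hi)), zero_add]
      have he : (range (d+1)).erase d = range d := by
        ext t; simp; omega
      rw [he, ← Finset.sum_filter_add_sum_filter_not _ (fun σ => σ.1 D = D),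
        flip_sum lam d hd', add_zero, ← ih]
      apply Finset.sum_congr _ (fun _ _ => rfl)
      ext σ
      simp only [mem_filter, mem_univ, true_and, G, H]
      constructor
      · rintro ⟨⟨a, b⟩, c⟩
        refine ⟨fun j hj => ?_, b⟩
        by_cases h : j.val = d
        · have : j = D := Fin.ext h
          rw [this, c]
        · exact a j (by omega)
      · rintro ⟨a, b⟩
        exact ⟨⟨fun j hj => a j (by omega), b⟩, a D (le_refl d)⟩
    have h2 : ∀ σ ∈ univ.filter (H (n := n) d), ∑ i ∈ range (d+1),
        P true (L lam σ ((range (d+1)).erase i)) =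
        P true (L lam σ (range (d+1))) + P false (L lam σ (range (d+1))) :=
      fun σ _ => P_erase_finset _ _ _
    rw [Finset.sum_congr rfl h2, Finset.sum_add_distrib] at h1
    rw [← h1, ← Finset.sum_filter_add_sum_filter_not _ (fun σ => σ.2 D = true)]
    congr 1
    · apply Finset.sum_congr _ (fun _ _ => rfl)
      ext σ
      simp only [mem_filter, mem_univ, true_and, G, H]
      constructor
      · rintro ⟨⟨a, b⟩, c⟩
        refine ⟨a, fun j hj => ?_⟩
        by_cases h : j.val = d
        · have : j = D := Fin.ext h
          rw [this, c]
        · exact b j (by omega)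
      · rintro ⟨a, b⟩
        exact ⟨⟨a, fun j hj => b j (by omega)⟩, b D (le_refl d)⟩
    · symm
      refine Finset.sum_nbij' (fun σ => (σ.1, fun j => if j.val ≤ d then ! σ.2 j else σ.2 j))
        (fun σ => (σ.1, fun j => if j.val ≤ d then ! σ.2 j else σ.2 j)) ?_ ?_ ?_ ?_ ?_
      · intro σ hσ
        simp only [mem_filter, mem_univ, true_and, G, H] at hσ ⊢
        refine ⟨⟨hσ.1, fun j hj => ?_⟩, ?_⟩
        · rw [if_neg (by omega)]
          exact hσ.2 j (by omega)
        · rw [if_pos (le_refl d), hσ.2 D (le_refl d)]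
          simp
      · intro σ hσ
        simp only [mem_filter, mem_univ, true_and, G, H] at hσ ⊢
        refine ⟨hσ.1.1, fun j hj => ?_⟩
        by_cases h : j.val = d
        · have : j = D := Fin.ext h
          rw [if_pos (by omega), this]
          simpa using hσ.2
        · rw [if_neg (by omega)]
          exact hσ.1.2 j (by omega)
      · intro σ _
        refine Prod.ext rfl (funext fun j => ?_)
        dsimp only
        split_ifs <;> simp
      · intro σ _
        refine Prod.ext rfl (funext fun j => ?_)
        dsimp only
        split_ifs <;> simp
      · intro σ hσ
        simp only [mem_filter, mem_univ, true_and, H] at hσ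
        have hne : ∀ i, ∃ j, A σ i j ≠ none := by
          intro i
          refine ⟨σ.1 ⟨0, by omega⟩, ?_⟩
          simp [A]
        have hL : L lam (σ.1, fun j => if j.val ≤ d then ! σ.2 j else σ.2 j) (range (d+1))
            = (L lam σ (range (d+1))).map comp := by
          unfold L
          rw [Multiset.map_map]
          apply Multiset.map_congr rfl
          intro i hi
          have hi : i < d + 1 := Finset.mem_range.1 hi
          simp only [Function.comp]
          rw [← hanti _ (hne i)]
          congr 1
          funext j
          simp only [A, neg]
          by_cases h : ((σ.1⁻¹ j : Fin n) : ℕ) ≤ i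
          · rw [if_pos h, if_pos h, if_pos]
            · rfl
            · by_contra hj
              have := hσ.1 j (by omega)
              rw [Equiv.Perm.inv_eq_iff_eq.2 this.symm] at h
              omega
          · rw [if_neg h, if_neg h]
            rfl
        rw [hL, P_comp, Bool.not_true]
        intro a ha b hb
        simp only [L, Multiset.mem_map] at ha hb
        obtain ⟨i, _, rfl⟩ := ha
        obtain ⟨j, _, rfl⟩ := hb
        exact chain_comp lam hcomp σ i j (hne i) (hne j)

/-- Octahedral Tucker lemma. -/
lemma tucker (lam : (Fin n → Option Bool) → ℕ)
    (hanti : ∀ v, (∃ j, v j ≠ none) → lam (neg v) = comp (lam v))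
    (hcomp : ∀ v w, (∃ j, v j ≠ none) → (∃ j, w j ≠ none) →
      (∀ j, v j ≠ none → w j = v j) → lam v ≠ comp (lam w))
    (hlam : ∀ v, (∃ j, v j ≠ none) → lam v / 2 ∈ Finset.Ico 1 n) (hn : 0 < n) : False := by
  classical
  have h := fan lam hanti hcomp n le_rfl
  obtain ⟨σ, _, hσ⟩ := Finset.exists_ne_zero_of_sum_ne_zero (h.trans_ne one_ne_zero)
  have hnd := alt_nodup _ (Multiset.pairwise_sort _ _) _ hσ
  rw [← Multiset.coe_nodup, Multiset.sort_eq] at hnd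
  have hinj := Multiset.inj_on_of_nodup_map hnd
  have hne : ∀ i, ∃ j, A σ i j ≠ none := by
    intro i
    refine ⟨σ.1 ⟨0, by omega⟩, ?_⟩
    simp [A]
  have : (range n).card ≤ (Finset.Ico 1 n).card := by
    apply Finset.card_le_card_of_injOn (fun i => lam (A σ i) / 2)
    · intro i _
      exact hlam _ (hne i)
    · intro i hi j hj hij
      apply hinj i hi j hj
      have h1 := chain_comp lam hcomp σ i j (hne i) (hne j)
      have h2 := chain_comp lam hcomp σ j i (hne j) (hne i)
      dsimp only at hij
      unfold comp at h1 h2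
      split_ifs at h1 h2 <;> omega
  simp at this
  omega

/-- The set of coordinates with sign `b`. -/
def pos (v : Fin n → Option Bool) (b : Bool) : Finset (Fin n) := univ.filter (fun j => v j = some b)

def supp (v : Fin n → Option Bool) : Finset (Fin n) := univ.filter (fun j => v j ≠ none)

def colors (c : Finset (Fin n) → ℕ) (k : ℕ) (v : Fin n → Option Bool) (b : Bool) : Set ℕ :=
  {m | ∃ S ⊆ pos v b, S.card = k ∧ c S = m}

noncomputable def mu (c : Finset (Fin n) → ℕ) (k : ℕ) (v : Fin n → Option Bool) : ℕ :=
  sInf (colors c k v true ∪ colors c k v false)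

def Q (v : Fin n → Option Bool) : Prop := ∃ j, v j = some true ∧ ∀ i < j, v i = none

open Classical in
noncomputable def lab (c : Finset (Fin n) → ℕ) (k : ℕ) (v : Fin n → Option Bool) : ℕ :=
  if (supp v).card ≤ 2 * k - 2 then 2 * (supp v).card + (if Q v then 0 else 1)
  else 2 * (2 * k - 2 + mu c k v) + (if mu c k v ∈ colors c k v true then 0 else 1)

lemma pos_neg (v : Fin n → Option Bool) (b : Bool) : pos (neg v) b = pos v (!b) := by
  ext j
  simp only [pos, neg, mem_filter, mem_univ, true_and]
  cases h : v j with
  | none => simp [h]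
  | some a => cases a <;> cases b <;> simp [h]

lemma supp_neg (v : Fin n → Option Bool) : supp (neg v) = supp v := by
  ext j
  simp [supp, neg]

lemma supp_eq (v : Fin n → Option Bool) : (supp v).card = (pos v true).card + (pos v false).card := by
  rw [← Finset.card_union_of_disjoint]
  · congr 1
    ext j
    simp only [supp, pos, mem_union, mem_filter, mem_univ, true_and]
    cases v j with
    | none => simp
    | some a => cases a <;> simp
  · rw [Finset.disjoint_left]
    intro j h1 h2
    simp only [pos, mem_filter, mem_univ, true_and] at h1 h2
    rw [h1] at h2
    simp at h2

lemma Q_neg (v : Fin n → Option Bool) (hv : ∃ j, v j ≠ none) : Q (neg v) ↔ ¬ Q v := by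
  classical
  have hS : (supp v).Nonempty := by
    obtain ⟨j, hj⟩ := hv
    exact ⟨j, by simp [supp, hj]⟩
  set m := (supp v).min' hS with hm
  have hm1 : v m ≠ none := by
    have := (supp v).min'_mem hS
    exact (Finset.mem_filter.1 this).2
  have hm2 : ∀ i < m, v i = none := by
    intro i hi
    by_contra h
    have := (supp v).min'_le i (by simp [supp, h])
    exact absurd hi (not_lt.2 this)
  have gen : ∀ j, v j ≠ none → (∀ i < j, v i = none) → j = m := by
    intro j h1 h2
    rcases lt_trichotomy j m with h | h | h
    · exact absurd (hm2 j h) h1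
    · exact h
    · exact absurd (h2 m h) hm1
  have q1 : Q v ↔ v m = some true := by
    constructor
    · rintro ⟨j, h1, h2⟩
      rw [← gen j (by simp [h1]) h2]
      exact h1
    · intro h
      exact ⟨m, h, hm2⟩
  have q2 : Q (neg v) ↔ v m = some false := by
    constructor
    · rintro ⟨j, h1, h2⟩
      simp only [neg, Option.map_eq_some_iff, Option.map_eq_none_iff] at h1 h2
      obtain ⟨a, h1, ha⟩ := h1
      have ha : a = false := by simpa using ha
      rw [← gen j (by simp [h1]) h2, h1, ha]
    · intro h
      exact ⟨m, by simp [neg, h], fun i hi => by simp [neg, hm2 i hi]⟩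
  rw [q1, q2]
  cases h : v m with
  | none => exact absurd h hm1
  | some a => cases a <;> simp

lemma colors_neg (c : Finset (Fin n) → ℕ) (k : ℕ) (v : Fin n → Option Bool) (b : Bool) :
    colors c k (neg v) b = colors c k v (!b) := by
  simp [colors, pos_neg]

lemma mu_neg (c : Finset (Fin n) → ℕ) (k : ℕ) (v : Fin n → Option Bool) :
    mu c k (neg v) = mu c k v := by
  simp [mu, colors_neg, Set.union_comm]

lemma mu_mem (c : Finset (Fin n) → ℕ) (k : ℕ) (hk : 1 ≤ k) (v : Fin n → Option Bool)
    (hv : ¬ (supp v).card ≤ 2 * k - 2) :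
    mu c k v ∈ colors c k v true ∪ colors c k v false := by
  apply Nat.sInf_mem
  rw [supp_eq] at hv
  have : k ≤ (pos v true).card ∨ k ≤ (pos v false).card := by omega
  rcases this with h | h
  · obtain ⟨S, hS, hc⟩ := Finset.exists_subset_card_eq h
    exact ⟨c S, Or.inl ⟨S, hS, hc, rfl⟩⟩
  · obtain ⟨S, hS, hc⟩ := Finset.exists_subset_card_eq h
    exact ⟨c S, Or.inr ⟨S, hS, hc, rfl⟩⟩

lemma colors_cross (c : Finset (Fin n) → ℕ) (k : ℕ)
    (hc : ∀ S T : Finset (Fin n), S.card = k → T.card = k → Disjoint S T → c S ≠ c T)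
    (v w : Fin n → Option Bool) (hvw : ∀ j, v j ≠ none → w j = v j) (b : Bool) (m : ℕ)
    (h1 : m ∈ colors c k v b) (h2 : m ∈ colors c k w (!b)) : False := by
  obtain ⟨S, hS, hS2, hS3⟩ := h1
  obtain ⟨T, hT, hT2, hT3⟩ := h2
  refine hc S T hS2 hT2 ?_ (hS3.trans hT3.symm)
  rw [Finset.disjoint_left]
  intro j hj1 hj2
  have e1 := hS hj1
  have e2 := hT hj2
  simp only [pos, mem_filter, mem_univ, true_and] at e1 e2
  rw [hvw j (by simp [e1]), e1] at e2
  cases b <;> simp at e2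

lemma colors_one (c : Finset (Fin n) → ℕ) (k : ℕ) (hk : 1 ≤ k)
    (hc : ∀ S T : Finset (Fin n), S.card = k → T.card = k → Disjoint S T → c S ≠ c T)
    (v : Fin n → Option Bool) (hv : ¬ (supp v).card ≤ 2 * k - 2) :
    mu c k v ∈ colors c k v false ↔ ¬ mu c k v ∈ colors c k v true := by
  have h1 := mu_mem c k hk v hv
  constructor
  · intro h h'
    exact colors_cross c k hc v v (fun _ _ => rfl) true _ h' h
  · intro h
    exact h1.resolve_left h

end KL

/-- **Kneser–Lovász theorem.** For `n ≥ 2k > 1`, the `(n,k)`-Kneser graph, whose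
vertices are the `k`-element subsets of `{1,…,n}` (modeled as `Fin n`) with edges
between disjoint sets, has no proper coloring with `n - 2k + 1` colors. -/
theorem kneser_lovasz (n k : ℕ) (hk : 1 ≤ k) (hn : 2 * k ≤ n) :
    ¬ ∃ c : Finset (Fin n) → ℕ,
      (∀ S : Finset (Fin n), S.card = k → c S ∈ Finset.Icc 1 (n - 2 * k + 1)) ∧
      (∀ S T : Finset (Fin n), S.card = k → T.card = k →
        Disjoint S T → c S ≠ c T) := by
  classical
  rintro ⟨c, hc1, hc⟩
  have hmu : ∀ v : Fin n → Option Bool, ¬ (KL.supp v).card ≤ 2 * k - 2 →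
      1 ≤ KL.mu c k v ∧ KL.mu c k v ≤ n - 2 * k + 1 := by
    intro v hv
    rcases KL.mu_mem c k hk v hv with h | h
    all_goals
      obtain ⟨S, _, hS, hS2⟩ := h
      rw [← hS2]
      exact Finset.mem_Icc.1 (hc1 S hS)
  have hsupp : ∀ v : Fin n → Option Bool, (∃ j, v j ≠ none) → 1 ≤ (KL.supp v).card := by
    rintro v ⟨j, hj⟩
    exact Finset.card_pos.2 ⟨j, by simp [KL.supp, hj]⟩
  refine KL.tucker (KL.lab c k) ?_ ?_ ?_ (by omega)
  · intro v hv
    unfold KL.lab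
    rw [KL.supp_neg, KL.mu_neg, KL.colors_neg, Bool.not_true]
    by_cases h : (KL.supp v).card ≤ 2 * k - 2
    · rw [if_pos h, if_pos h]
      have := KL.Q_neg v hv
      by_cases hq : KL.Q v
      · have h2 : ¬ KL.Q (KL.neg v) := by tauto
        simp [hq, h2, KL.comp]
      · have h2 : KL.Q (KL.neg v) := by tauto
        simp [hq, h2, KL.comp]
    · rw [if_neg h, if_neg h]
      have := KL.colors_one c k hk hc v h
      by_cases hq : KL.mu c k v ∈ KL.colors c k v true
      · have h2 : ¬ KL.mu c k v ∈ KL.colors c k v false := by tauto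
        simp [hq, h2, KL.comp]
      · have h2 : KL.mu c k v ∈ KL.colors c k v false := by tauto
        simp [hq, h2, KL.comp]
  · intro v w hv hw hvw heq
    have hsub : KL.supp v ⊆ KL.supp w := by
      intro j hj
      simp only [KL.supp, Finset.mem_filter, Finset.mem_univ, true_and] at hj ⊢
      rwa [hvw j hj]
    have hhalf : KL.lab c k v / 2 = KL.lab c k w / 2 := by
      rw [heq]; unfold KL.comp; split_ifs <;> omega
    have hpar : KL.lab c k v % 2 ≠ KL.lab c k w % 2 := by
      rw [heq]; unfold KL.comp; split_ifs <;> omega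
    have hlow : ∀ x (p : Prop) [Decidable p], (2 * x + (if p then 0 else 1)) / 2 = x := by
      intro x p _; split_ifs <;> omega
    have hm : ∀ x (p : Prop) [Decidable p],
        (2 * x + (if p then 0 else 1)) % 2 = if p then 0 else 1 := by
      intro x p _; split_ifs <;> omega
    unfold KL.lab at hhalf hpar
    by_cases h1 : (KL.supp v).card ≤ 2 * k - 2 <;> by_cases h2 : (KL.supp w).card ≤ 2 * k - 2
    · rw [if_pos h1, if_pos h2, hlow, hlow] at hhalf
      have hs : KL.supp v = KL.supp w := Finset.eq_of_subset_of_card_le hsub hhalf.ge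
      have : v = w := by
        funext j
        by_cases hj : v j = none
        · have : j ∉ KL.supp w := by rw [← hs]; simp [KL.supp, hj]
          have : w j = none := by simpa [KL.supp] using this
          rw [hj, this]
        · exact (hvw j hj).symm
      rw [this] at hpar
      exact hpar rfl
    · rw [if_pos h1, if_neg h2, hlow, hlow] at hhalf
      have := hmu w h2
      omega
    · rw [if_neg h1, if_pos h2, hlow, hlow] at hhalf
      have := hmu v h1
      omega
    · rw [if_neg h1, if_neg h2, hlow, hlow] at hhalf
      rw [if_neg h1, if_neg h2, hm, hm] at hpar
      have hmm : KL.mu c k v = KL.mu c k w := by omega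
      have c1 := KL.colors_one c k hk hc v h1
      have c2 := KL.colors_one c k hk hc w h2
      by_cases p1 : KL.mu c k v ∈ KL.colors c k v true
      · by_cases p2 : KL.mu c k w ∈ KL.colors c k w true
        · simp [p1, p2] at hpar
        · have := c2.2 p2
          rw [← hmm] at this
          exact KL.colors_cross c k hc v w hvw true _ p1 this
      · by_cases p2 : KL.mu c k w ∈ KL.colors c k w true
        · rw [← hmm] at p2
          exact KL.colors_cross c k hc v w hvw false _ (c1.2 p1) p2
        · simp [p1, p2] at hpar
  · intro v hv
    have := hsupp v hv
    have := hmu v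
    rw [Finset.mem_Ico]
    unfold KL.lab
    split_ifs with h1 <;> [skip; skip; have := hmu v h1; have := hmu v h1] <;> omega
end

section
/- Let n ≥ 2k and k ≥ 2, and let c be a proper coloring of the (n,k)-Kneser graph (with any set of colors). If a color class P_ℓ of c is not star-shaped, then |P_ℓ| ≤ k² · C(n−2, k−2), where C(n−2,k−2) is the binomial coefficient. -/
open Classical in
/-- The number of `k`-subsets containing two given distinct points. -/
theorem card_kSets_containing_pair (n k : ℕ) (i j : Fin n) (hij : i ≠ j) :
    ((Finset.univ : Finset (Finset (Fin n))).filter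
        (fun S : Finset (Fin n) => S.card = k ∧ i ∈ S ∧ j ∈ S)).card
      ≤ (n - 2).choose (k - 2) := by
  have hc : (Finset.powersetCard (k - 2) (Finset.univ \ {i, j} : Finset (Fin n))).card
      = (n - 2).choose (k - 2) := by
    rw [Finset.card_powersetCard, Finset.card_sdiff_of_subset (Finset.subset_univ _),
      Finset.card_pair hij, Finset.card_univ, Fintype.card_fin]
  rw [← hc]
  have hsub : ∀ S : Finset (Fin n), i ∈ S → j ∈ S → ({i, j} : Finset (Fin n)) ⊆ S := by
    intro S hi hj x hx
    simp only [Finset.mem_insert, Finset.mem_singleton] at hx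
    rcases hx with rfl | rfl <;> assumption
  apply Finset.card_le_card_of_injOn (fun S => S \ {i, j})
  · intro S hS
    simp only [Finset.coe_filter, Finset.mem_univ, true_and, Set.mem_setOf_eq] at hS
    obtain ⟨h1, hi, hj⟩ := hS
    simp only [Finset.mem_coe, Finset.mem_powersetCard]
    refine ⟨Finset.sdiff_subset_sdiff (Finset.subset_univ _) (Finset.Subset.refl _), ?_⟩
    rw [Finset.card_sdiff_of_subset (hsub S hi hj), Finset.card_pair hij, h1]
  · intro S hS T hT h
    simp only [Finset.coe_filter, Finset.mem_univ, true_and, Set.mem_setOf_eq] at hS hT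
    have h' : S \ {i, j} = T \ {i, j} := h
    rw [← Finset.sdiff_union_of_subset (hsub S hS.2.1 hS.2.2), h',
      Finset.sdiff_union_of_subset (hsub T hT.2.1 hT.2.2)]

open Classical in
/-- For `n ≥ 2k`, `k ≥ 2`, and a proper coloring `c` of the `(n,k)`-Kneser graph
(with an arbitrary set of colors), any color class `P_ℓ` that is not star-shaped
(i.e. there is no element common to all of its members) has
`|P_ℓ| ≤ k² · C(n-2, k-2)`. -/
theorem nonStarShaped_class_small {α : Type*} (n k : ℕ) (hk : 2 ≤ k) (hn : 2 * k ≤ n)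
    (c : Finset (Fin n) → α)
    (hproper : ∀ S T : Finset (Fin n), S.card = k → T.card = k →
      Disjoint S T → c S ≠ c T)
    (ℓ : α)
    (hns : ¬ ∃ i : Fin n, ∀ S : Finset (Fin n), S.card = k → c S = ℓ → i ∈ S) :
    ((Finset.univ : Finset (Finset (Fin n))).filter
        (fun S : Finset (Fin n) => S.card = k ∧ c S = ℓ)).card
      ≤ k ^ 2 * (n - 2).choose (k - 2) := by
  push Not at hns
  choose T hTk hTc hTi using hns
  by_cases hne : ∃ S : Finset (Fin n), S.card = k ∧ c S = ℓ
  · obtain ⟨S, hSk, hSc⟩ := hne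
    have hmeet : ∀ A B : Finset (Fin n), A.card = k → B.card = k → c A = ℓ → c B = ℓ →
        ∃ x, x ∈ A ∧ x ∈ B := by
      intro A B hA hB hcA hcB
      by_contra hcon
      push Not at hcon
      exact hproper A B hA hB (Finset.disjoint_left.mpr hcon) (hcA.trans hcB.symm)
    have hsub : (Finset.univ : Finset (Finset (Fin n))).filter
        (fun R : Finset (Fin n) => R.card = k ∧ c R = ℓ) ⊆
        S.biUnion fun i => (T i).biUnion fun j =>
          (Finset.univ : Finset (Finset (Fin n))).filter
            (fun R : Finset (Fin n) => R.card = k ∧ i ∈ R ∧ j ∈ R) := by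
      intro R hR
      simp only [Finset.mem_filter, Finset.mem_univ, true_and] at hR
      obtain ⟨i, hiS, hiR⟩ := hmeet S R hSk hR.1 hSc hR.2
      obtain ⟨j, hjT, hjR⟩ := hmeet (T i) R (hTk i) hR.1 (hTc i) hR.2
      simp only [Finset.mem_biUnion, Finset.mem_filter, Finset.mem_univ, true_and]
      exact ⟨i, hiS, j, hjT, hR.1, hiR, hjR⟩
    refine (Finset.card_le_card hsub).trans ?_
    have hin : ∀ i ∈ S, ((T i).biUnion fun j =>
          (Finset.univ : Finset (Finset (Fin n))).filter
            (fun R : Finset (Fin n) => R.card = k ∧ i ∈ R ∧ j ∈ R)).card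
          ≤ k * (n - 2).choose (k - 2) := by
      intro i _
      rw [← hTk i]
      refine Finset.card_biUnion_le_card_mul _ _ _ ?_
      intro j hj
      rw [hTk i]
      exact card_kSets_containing_pair n k i j (fun h => hTi i (h ▸ hj))
    refine (Finset.card_biUnion_le_card_mul _ _ _ hin).trans ?_
    rw [hSk, pow_two, mul_assoc]
  · push Not at hne
    rw [Finset.filter_false_of_mem (fun S _ h => hne S h.1 h.2)]
    simp
end

section
/- Let k ≥ 2 and n ≥ k⁴. Then (n − 2k + 1) · k² · C(n−2, k−2) < C(n, k), where C(a,b) denotes the binomial coefficient. -/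
/-- For `k ≥ 2` and `n ≥ k⁴`, we have `(n - 2k + 1) · k² · C(n-2, k-2) < C(n, k)`. -/
theorem counting_inequality (n k : ℕ) (hk : 2 ≤ k) (hn : k ^ 4 ≤ n) :
    (n - 2 * k + 1) * k ^ 2 * (n - 2).choose (k - 2) < n.choose k := by
  obtain ⟨j, rfl⟩ := Nat.exists_eq_add_of_le' hk
  have h4 : 2 * (j + 2) ≤ (j + 2) ^ 4 := by
    have : 2 ^ 3 ≤ (j + 2) ^ 3 := Nat.pow_le_pow_left hk 3
    calc 2 * (j + 2) ≤ (j + 2) ^ 3 * (j + 2) := Nat.mul_le_mul_right _ (by omega)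
      _ = _ := by ring
  obtain ⟨m, rfl⟩ := Nat.exists_eq_add_of_le' (show 2 ≤ n by omega)
  have e1 := Nat.add_one_mul_choose_eq m j
  have e2 := Nat.add_one_mul_choose_eq (m + 1) (j + 1)
  have hc : 0 < m.choose j := Nat.choose_pos (by omega)
  simp only [Nat.add_sub_cancel]
  have hA : m + 2 - 2 * (j + 2) + 1 < m + 2 := by omega
  have hB : (j + 2) ^ 3 * (j + 1) ≤ m + 1 := by
    have h3 : 0 < (j + 2) ^ 3 := by positivity
    have : (j + 2) ^ 4 = (j + 2) ^ 3 * (j + 1) + (j + 2) ^ 3 := by ring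
    omega
  generalize m + 2 - 2 * (j + 2) + 1 = a at *
  have key : a * ((j + 2) ^ 3 * (j + 1)) < (m + 2) * (m + 1) :=
    Nat.mul_lt_mul_of_lt_of_le hA hB (by omega)
  apply Nat.lt_of_mul_lt_mul_right (a := (j + 2) * (j + 1))
  calc a * (j + 2) ^ 2 * m.choose j * ((j + 2) * (j + 1))
      = a * ((j + 2) ^ 3 * (j + 1)) * m.choose j := by ring
    _ < (m + 2) * (m + 1) * m.choose j := Nat.mul_lt_mul_of_pos_right key hc
    _ = (m + 2) * ((m + 1) * m.choose j) := by ring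
    _ = ((m + 1 + 1) * (m + 1).choose (j + 1)) * (j + 1) := by rw [e1]; ring
    _ = (m + 2).choose (j + 2) * ((j + 2) * (j + 1)) := by rw [e2]; ring
end

section
/- (Octahedral Tucker lemma) Let n ≥ 2. If λ : B^n → {1, ±2, …, ±n} is antipodal, then there exist two elements of B^n that are complementary with respect to λ. -/
namespace OctTucker

/-- mod 2 coboundary of a cochain on lists -/
def delta {α : Type*} : (List α → ZMod 2) → List α → ZMod 2
  | _, [] => 0
  | G, x :: c => G c + delta (fun d => G (x :: d)) c

theorem delta_perm {α : Type*} {l m : List α} (h : l.Perm m) :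
    ∀ G : List α → ZMod 2, (∀ a b : List α, a.Perm b → G a = G b) → delta G l = delta G m := by
  induction h with
  | nil => intro G _; rfl
  | cons x h ih =>
    intro G hG
    simp only [delta]
    rw [hG _ _ h, ih _ (fun a b hab => hG _ _ (hab.cons x))]
  | swap x y l =>
    intro G hG
    simp only [delta]
    have : (fun d => G (y :: x :: d)) = (fun d => G (x :: y :: d)) := by
      funext d
      exact hG _ _ (List.Perm.swap _ _ _)
    rw [this]
    ring
  | trans _ _ ih1 ih2 =>
    intro G hG
    rw [ih1 G hG, ih2 G hG]

theorem delta_congr {α : Type*} (l : List α) :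
    ∀ G G' : List α → ZMod 2, (∀ a, a.Sublist l → G a = G' a) → delta G l = delta G' l := by
  induction l with
  | nil => intro G G' _; rfl
  | cons x c ih =>
    intro G G' h
    simp only [delta]
    rw [h c (List.sublist_cons_self _ _), ih _ _ (fun a ha => h _ (ha.cons_cons x))]

theorem delta_map {α β : Type*} (f : α → β) (l : List α) :
    ∀ G : List β → ZMod 2, delta (fun c => G (c.map f)) l = delta G (l.map f) := by
  induction l with
  | nil => intro G; rfl
  | cons x c ih =>
    intro G
    simp only [delta, List.map_cons]
    rw [← ih]

def sg (x : ℤ) : ZMod 2 := if 0 < x then 1 else 0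

theorem sg_neg (x : ℤ) (hx : x ≠ 0) : sg (-x) = sg x + 1 := by
  unfold sg
  by_cases h : 0 < x
  · have : ¬ 0 < -x := by omega
    simp only [h, this, if_true, if_false]; decide
  · have : 0 < -x := by omega
    simp only [h, this, if_true, if_false]; decide

def alt : ZMod 2 → List ℤ → ZMod 2
  | _, [] => 1
  | e, x :: c => (e + sg x) * alt (sg x) c

theorem delta_smul {α : Type*} (k : ZMod 2) (l : List α) : ∀ G : List α → ZMod 2,
    delta (fun d => k * G d) l = k * delta G l := by
  induction l with
  | nil => intro G; simp [delta]
  | cons x c ih => intro G; simp only [delta]; rw [ih]; ring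

theorem delta_alt (l : List ℤ) : ∀ e, delta (alt e) l = alt 0 l + alt 1 l := by
  induction l with
  | nil => intro e; simp only [delta, alt]; decide
  | cons x c ih =>
    intro e
    simp only [delta, alt]
    rw [delta_smul, ih]
    have key : ∀ (e s : ZMod 2) (f : ZMod 2 → ZMod 2),
      f e + (e + s) * (f 0 + f 1) = (0 + s) * f s + (1 + s) * f s := by decide
    exact key e (sg x) (fun t => alt t c)

theorem alt_neg (l : List ℤ) (h : ∀ x ∈ l, x ≠ 0) :
    ∀ e, alt e (l.map (fun x => -x)) = alt (e + 1) l := by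
  induction l with
  | nil => intro e; rfl
  | cons x c ih =>
    intro e
    simp only [alt, List.map_cons]
    rw [ih (fun y hy => h y (List.mem_cons_of_mem _ hy)), sg_neg x (h x (by simp))]
    have : sg x + 1 + 1 = sg x := by generalize sg x = t; revert t; decide
    rw [this]; ring

def le' (a b : ℤ) : Prop := a.natAbs < b.natAbs ∨ (a.natAbs = b.natAbs ∧ a ≤ b)

instance : DecidableRel le' := fun a b => by unfold le'; infer_instance
instance : Std.Total le' := ⟨fun a b => by unfold le'; omega⟩
instance : IsTrans ℤ le' := ⟨fun a b c => by unfold le'; omega⟩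
instance : Std.Antisymm le' := ⟨fun a b => by unfold le'; omega⟩

def srt (l : List ℤ) : List ℤ := l.insertionSort le'

theorem srt_perm (l : List ℤ) : (srt l).Perm l := List.perm_insertionSort _ _
theorem srt_sorted (l : List ℤ) : (srt l).Pairwise le' := List.pairwise_insertionSort _ _

theorem eq_srt {l m : List ℤ} (h : m.Perm l) (hm : m.Pairwise le') : srt l = m :=
  List.Perm.eq_of_pairwise (fun a b _ _ h1 h2 => Std.Antisymm.antisymm a b h1 h2) (srt_sorted l) hm
    ((srt_perm l).trans h.symm)

def F (l : List ℤ) : ZMod 2 := alt 0 (srt l)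

theorem F_perm (a b : List ℤ) (h : a.Perm b) : F a = F b := by
  unfold F
  rw [eq_srt (l := a) ((srt_perm b).trans h.symm) (srt_sorted b)]

def NC (l : List ℤ) : Prop := ∀ x ∈ l, ∀ y ∈ l, x ≠ -y

theorem delta_F (l : List ℤ) (h : NC l) :
    delta F l = F l + F (l.map (fun x => -x)) := by
  have hs : NC (srt l) := fun x hx y hy => h x ((srt_perm l).mem_iff.1 hx) y ((srt_perm l).mem_iff.1 hy)
  have h0 : ∀ x ∈ srt l, x ≠ 0 := fun x hx h0 => hs x hx x hx (by omega)
  have e1 : srt (l.map (fun x => -x)) = (srt l).map (fun x => -x) := by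
    apply eq_srt ((srt_perm l).map _)
    rw [List.pairwise_map]
    refine List.Pairwise.imp_of_mem ?_ (srt_sorted l)
    intro a b ha hb hab
    have := hs a ha b hb
    unfold le' at *
    omega
  rw [← delta_perm (srt_perm l) F F_perm]
  rw [delta_congr (srt l) F (alt 0) (fun a ha => by
    unfold F
    rw [eq_srt (List.Perm.refl a) ((srt_sorted l).sublist ha)])]
  rw [delta_alt]
  unfold F
  rw [e1, alt_neg _ h0]
  rfl

theorem alt_sorted (l : List ℤ) (hs : l.Pairwise le') (h : NC l) :
    ∀ e, alt e l ≠ 0 → (l.map Int.natAbs).Pairwise (· < ·) := by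
  induction l with
  | nil => intro e _; simp
  | cons x c ih =>
    intro e he
    simp only [alt] at he
    have hc := right_ne_zero_of_mul he
    have hs' := List.pairwise_cons.1 hs
    have h1 := ih hs'.2 (fun a ha b hb => h a (by simp [ha]) b (by simp [hb])) _ hc
    rw [List.map_cons, List.pairwise_cons]
    refine ⟨?_, h1⟩
    cases c with
    | nil => simp
    | cons y d =>
      have hxy : x.natAbs < y.natAbs := by
        have h2 := hs'.1 y (by simp)
        have h3 := h x (by simp) y (by simp)
        simp only [alt] at hc
        have h4 := left_ne_zero_of_mul hc
        have h5 : x ≠ y := by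
          rintro rfl
          apply h4
          generalize sg x = t; revert t; decide
        unfold le' at h2
        omega
      intro b hb
      rw [List.map_cons, List.mem_cons] at hb
      rcases hb with rfl | hb
      · exact hxy
      · rw [List.map_cons, List.pairwise_cons] at h1
        exact hxy.trans (h1.1 b hb)

theorem F_zero (n : ℕ) (hn : 2 ≤ n) (l : List ℤ) (h : NC l) (hl : l.length = n)
    (hr : ∀ x ∈ l, 2 ≤ x.natAbs ∧ x.natAbs ≤ n) : F l = 0 := by
  by_contra hF
  have hs : NC (srt l) := fun x hx y hy => h x ((srt_perm l).mem_iff.1 hx) y ((srt_perm l).mem_iff.1 hy)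
  have h1 := alt_sorted _ (srt_sorted l) hs 0 hF
  have h2 : ((srt l).map Int.natAbs).Nodup := h1.imp (fun h => ne_of_lt h)
  have h3 : ((srt l).map Int.natAbs).toFinset ⊆ Finset.Icc 2 n := by
    intro t ht
    rw [List.mem_toFinset, List.mem_map] at ht
    obtain ⟨x, hx, rfl⟩ := ht
    rw [Finset.mem_Icc]
    exact hr x ((srt_perm l).mem_iff.1 hx)
  have h4 := Finset.card_le_card h3
  rw [List.toFinset_card_of_nodup h2, List.length_map, (srt_perm l).length_eq, hl, Nat.card_Icc] at h4
  omega

/-! Domain side -/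

abbrev V (n : ℕ) := Fin n → SignType

def supp {n : ℕ} (v : V n) : Finset (Fin n) := Finset.univ.filter (fun i => v i ≠ 0)

theorem mem_supp {n : ℕ} (v : V n) (i : Fin n) : i ∈ supp v ↔ v i ≠ 0 := by simp [supp]

def del {n : ℕ} (v : V n) (i : Fin n) : V n := Function.update v i 0

theorem supp_del {n : ℕ} (v : V n) (i : Fin n) : supp (del v i) = (supp v).erase i := by
  ext j
  by_cases h : j = i
  · subst h; simp [mem_supp, del]
  · simp [mem_supp, del, h]

theorem del_comm {n : ℕ} (v : V n) (i j : Fin n) : del (del v i) j = del (del v j) i := by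
  ext k
  by_cases h : k = i <;> by_cases h' : k = j <;> simp [del, Function.update_apply, h, h']

def I {n : ℕ} : ℕ → V n → (List (V n) → ZMod 2) → ZMod 2
  | 0, _, G => G []
  | k + 1, v, G => ∑ i ∈ supp v, I k (del v i) (fun c => G (v :: c))

theorem I_add {n : ℕ} (k : ℕ) : ∀ (v : V n) (G G' : List (V n) → ZMod 2),
    I k v (fun c => G c + G' c) = I k v G + I k v G' := by
  induction k with
  | zero => intro v G G'; rfl
  | succ k ih =>
    intro v G G'
    simp only [I]
    rw [← Finset.sum_add_distrib]
    exact Finset.sum_congr rfl (fun i _ => ih _ _ _)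

theorem pair_sum {n : ℕ} (S : Finset (Fin n)) (f : Fin n → Fin n → ZMod 2)
    (hf : ∀ i j, f i j = f j i) : ∑ i ∈ S, ∑ j ∈ S.erase i, f i j = 0 := by
  rw [Finset.sum_sigma']
  refine Finset.sum_involution (fun p _ => ⟨p.2, p.1⟩) ?_ ?_ ?_ ?_
  · rintro ⟨i, j⟩ _
    simp only
    rw [hf i j]
    exact CharTwo.add_self_eq_zero _
  · rintro ⟨i, j⟩ h _ he
    simp only [Finset.mem_sigma, Finset.mem_erase] at h
    simp only [Sigma.mk.injEq] at he
    exact h.2.1 he.1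
  · rintro ⟨i, j⟩ h
    simp only [Finset.mem_sigma, Finset.mem_erase] at h ⊢
    exact ⟨h.2.2, fun e => h.2.1 e.symm, h.1⟩
  · rintro ⟨i, j⟩ h
    rfl

theorem I_delta {n : ℕ} (k : ℕ) : ∀ (v : V n) (G : List (V n) → ZMod 2),
    I (k + 1) v (delta G) = ∑ i ∈ supp v, I k (del v i) G := by
  induction k with
  | zero => intro v G; simp [I, delta]
  | succ k ih =>
    intro v G
    rw [I]
    simp only [delta]
    simp only [I_add]
    rw [Finset.sum_add_distrib]
    simp only [ih, supp_del]
    rw [pair_sum _ (fun i j => I k (del (del v i) j) (fun d => G (v :: d)))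
      (fun i j => by rw [del_comm]), add_zero]

def LE' {n : ℕ} (x y : V n) : Prop := ∀ i, x i = 0 ∨ x i = y i

def Good {n : ℕ} (c : List (V n)) : Prop :=
  (∀ x ∈ c, supp x ≠ ∅) ∧ ∀ x ∈ c, ∀ y ∈ c, LE' x y ∨ LE' y x

theorem I_congr {n : ℕ} (k : ℕ) : ∀ (v : V n) (G G' : List (V n) → ZMod 2),
    (supp v).card = k →
    (∀ c, Good c → (∀ x ∈ c, LE' x v) → c.length = k → G c = G' c) →
    I k v G = I k v G' := by
  induction k with
  | zero => intro v G G' _ h; exact h [] (by simp [Good]) (by simp) rfl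
  | succ k ih =>
    intro v G G' hk h
    simp only [I]
    refine Finset.sum_congr rfl (fun i hi => ih _ _ _ ?_ ?_)
    · rw [supp_del, Finset.card_erase_of_mem hi]; omega
    · intro c hc hv hlen
      have hcv : ∀ x ∈ c, LE' x v := by
        intro x hx j
        have := hv x hx j
        by_cases hj : j = i
        · subst hj; simp [del] at this; exact Or.inl this
        · simpa [del, hj] using this
      have hvv : LE' v v := fun j => Or.inr rfl
      apply h
      · constructor
        · intro x hx
          rcases List.mem_cons.1 hx with rfl | hx
          · intro h0; rw [h0] at hk; simp at hk
          · exact hc.1 x hx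
        · intro x hx y hy
          rcases List.mem_cons.1 hx with hx' | hx'
          · rcases List.mem_cons.1 hy with hy' | hy'
            · rw [hx', hy']; exact Or.inl hvv
            · rw [hx']; exact Or.inr (hcv y hy')
          · rcases List.mem_cons.1 hy with hy' | hy'
            · rw [hy']; exact Or.inl (hcv x hx')
            · exact hc.2 x hx' y hy'
      · intro x hx
        rcases List.mem_cons.1 hx with rfl | hx
        · exact hvv
        · exact hcv x hx
      · simp [hlen]

def ng {n : ℕ} (v : V n) : V n := fun i => - v i

theorem sgn_neg_zero (a : SignType) : -a = 0 ↔ a = 0 := by revert a; decide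
theorem sgn_nn (a : SignType) : - -a = a := by revert a; decide

theorem supp_ng {n : ℕ} (v : V n) : supp (ng v) = supp v := by
  ext j; simp [supp, ng, sgn_neg_zero]

theorem del_ng {n : ℕ} (v : V n) (i : Fin n) : del (ng v) i = ng (del v i) := by
  ext j
  by_cases h : j = i
  · subst h; simp [del, ng]
  · simp [del, ng, h]

theorem I_neg {n : ℕ} (k : ℕ) : ∀ (v : V n) (G : List (V n) → ZMod 2),
    I k (ng v) G = I k v (fun c => G (c.map ng)) := by
  induction k with
  | zero => intro v G; rfl
  | succ k ih =>
    intro v G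
    simp only [I, supp_ng, del_ng, ih, List.map_cons]

def N {n : ℕ} (G : List (V n) → ZMod 2) (S : Finset (Fin n)) : ZMod 2 :=
  ∑ v ∈ Finset.univ.filter (fun v : V n => supp v = S), I S.card v G

theorem N_insert {n : ℕ} (G : List (V n) → ZMod 2)
    (hG : ∀ c, Good c → delta G c = G c + G (c.map ng))
    (S : Finset (Fin n)) (s : Fin n) (hs : s ∉ S) : N G (insert s S) = N G S := by
  set T := Finset.univ.filter (fun v : V n => supp v = insert s S) with hT
  set k := S.card with hk
  have hcard : (insert s S).card = k + 1 := Finset.card_insert_of_notMem hs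
  have hsT : ∀ v ∈ T, v s ≠ 0 := by
    intro v hv
    rw [← mem_supp, (Finset.mem_filter.1 hv).2]; simp
  have h1 : N G (insert s S) = ∑ v ∈ T.filter (fun v => v s = 1), I (k + 1) v (delta G) := by
    unfold N
    rw [hcard, ← Finset.sum_filter_add_sum_filter_not T (fun v => v s = 1)]
    have : ∑ v ∈ T.filter (fun v => ¬ v s = 1), I (k + 1) v G
        = ∑ v ∈ T.filter (fun v => v s = 1), I (k + 1) (ng v) G := by
      refine Finset.sum_bij' (fun v _ => ng v) (fun v _ => ng v) ?_ ?_ ?_ ?_ ?_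
      · intro v hv
        rw [Finset.mem_filter] at hv ⊢
        refine ⟨?_, ?_⟩
        · simpa [hT, supp_ng] using hv.1
        · have := hsT v hv.1
          have h2 := hv.2
          simp only [ng]
          revert this h2
          generalize v s = t
          revert t; decide
      · intro v hv
        rw [Finset.mem_filter] at hv ⊢
        refine ⟨?_, ?_⟩
        · simpa [hT, supp_ng] using hv.1
        · simp only [ng, hv.2]; decide
      · intro v _; funext i; simp [ng, sgn_nn]
      · intro v _; funext i; simp [ng, sgn_nn]
      · intro v _
        congr 1
        funext i; simp [ng, sgn_nn]
    rw [this, ← Finset.sum_add_distrib]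
    refine Finset.sum_congr rfl (fun v hv => ?_)
    rw [I_neg, ← I_add]
    apply I_congr
    · rw [(Finset.mem_filter.1 (Finset.mem_filter.1 hv).1).2, hcard]
    · intro c hc _ _
      rw [hG c hc]
  rw [h1]
  have h2 : ∑ v ∈ T.filter (fun v => v s = 1), I (k + 1) v (delta G)
      = ∑ v ∈ T.filter (fun v => v s = 1), ∑ i ∈ insert s S, I k (del v i) G := by
    refine Finset.sum_congr rfl (fun v hv => ?_)
    rw [I_delta, (Finset.mem_filter.1 (Finset.mem_filter.1 hv).1).2]
  rw [h2, Finset.sum_comm, Finset.sum_insert hs]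
  have h3 : ∑ i ∈ S, ∑ v ∈ T.filter (fun v => v s = 1), I k (del v i) G = 0 := by
    refine Finset.sum_eq_zero (fun i hi => ?_)
    have his : s ≠ i := fun h => hs (h ▸ hi)
    refine Finset.sum_involution (fun v _ => Function.update v i (- v i)) ?_ ?_ ?_ ?_
    · intro v _
      have : del (Function.update v i (- v i)) i = del v i := by simp [del]
      rw [this]
      exact CharTwo.add_self_eq_zero _
    · intro v hv _ he
      have h0 : v i ≠ 0 := by
        rw [← mem_supp, (Finset.mem_filter.1 (Finset.mem_filter.1 hv).1).2]; simp [hi]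
      have := congrFun he i
      simp only [Function.update_self] at this
      revert this h0
      generalize v i = t
      revert t; decide
    · intro v hv
      rw [Finset.mem_filter] at hv ⊢
      refine ⟨?_, by simp [Function.update_of_ne his, hv.2]⟩
      rw [hT, Finset.mem_filter] at hv ⊢
      refine ⟨Finset.mem_univ _, ?_⟩
      rw [← hv.1.2]
      ext j
      by_cases h : j = i
      · subst h; simp [supp, sgn_neg_zero]
      · simp [supp, h]
    · intro v hv
      simp [sgn_nn]
  rw [h3, add_zero]
  unfold N
  refine Finset.sum_bij' (fun v _ => del v s) (fun v _ => Function.update v s 1) ?_ ?_ ?_ ?_ ?_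
  · intro v hv
    rw [Finset.mem_filter]
    refine ⟨Finset.mem_univ _, ?_⟩
    rw [supp_del, (Finset.mem_filter.1 (Finset.mem_filter.1 hv).1).2, Finset.erase_insert hs]
  · intro v hv
    rw [Finset.mem_filter] at hv ⊢
    refine ⟨?_, by simp⟩
    rw [hT, Finset.mem_filter]
    refine ⟨Finset.mem_univ _, ?_⟩
    rw [← hv.2]
    ext j
    by_cases h : j = s
    · subst h; simp [supp]
    · simp [supp, h]
  · intro v hv
    have := (Finset.mem_filter.1 hv).2
    simp only [del, Function.update_idem]
    rw [← this, Function.update_eq_self]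
  · intro v hv
    have : v s = 0 := by
      by_contra h
      rw [← ne_eq, ← mem_supp, (Finset.mem_filter.1 hv).2] at h
      exact hs h
    simp only [del, Function.update_idem]
    rw [← this, Function.update_eq_self]
  · intro v hv
    rfl

theorem N_eq {n : ℕ} (G : List (V n) → ZMod 2)
    (hG : ∀ c, Good c → delta G c = G c + G (c.map ng))
    (S : Finset (Fin n)) : N G S = G [] := by
  induction S using Finset.induction_on with
  | empty =>
    unfold N
    have : Finset.univ.filter (fun v : V n => supp v = ∅) = {fun _ => 0} := by
      ext v
      simp only [Finset.mem_filter, Finset.mem_univ, true_and, Finset.mem_singleton]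
      constructor
      · intro h
        funext i
        by_contra h0
        have := (mem_supp v i).2 h0
        rw [h] at this
        simp at this
      · rintro rfl
        simp [supp]
    rw [this, Finset.sum_singleton]
    rfl
  | insert s S hs ih => rw [N_insert G hG S s hs, ih]

def P {n : ℕ} (v : V n) : Finset (Fin n) := Finset.univ.filter (fun i => v i = 1)
def M {n : ℕ} (v : V n) : Finset (Fin n) := Finset.univ.filter (fun i => v i = -1)

theorem mem_P {n : ℕ} (v : V n) (i : Fin n) : i ∈ P v ↔ v i = 1 := by simp [P]
theorem mem_M {n : ℕ} (v : V n) (i : Fin n) : i ∈ M v ↔ v i = -1 := by simp [M]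

theorem disj {n : ℕ} (v : V n) : Disjoint (P v) (M v) := by
  rw [Finset.disjoint_left]
  intro i h1 h2
  simp only [P, M, Finset.mem_filter, Finset.mem_univ, true_and] at h1 h2
  rw [h1] at h2
  revert h2; decide

theorem P_ng {n : ℕ} (v : V n) : P (ng v) = M v := by
  ext i
  simp only [mem_P, mem_M, ng]
  generalize v i = t; revert t; decide

theorem M_ng {n : ℕ} (v : V n) : M (ng v) = P v := by
  ext i
  simp only [mem_P, mem_M, ng]
  generalize v i = t; revert t; decide

theorem P_mono {n : ℕ} {v w : V n} (h : LE' v w) : P v ⊆ P w := by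
  intro i hi
  simp only [mem_P] at hi ⊢
  rcases h i with h | h
  · rw [h] at hi; exact absurd hi (by decide)
  · rw [← h, hi]

theorem M_mono {n : ℕ} {v w : V n} (h : LE' v w) : M v ⊆ M w := by
  intro i hi
  simp only [mem_M] at hi ⊢
  rcases h i with h | h
  · rw [h] at hi; exact absurd hi (by decide)
  · rw [← h, hi]

theorem PM_ne {n : ℕ} {v : V n} (h : supp v ≠ ∅) : ¬ (P v = ∅ ∧ M v = ∅) := by
  rintro ⟨h1, h2⟩
  apply h
  rw [Finset.eq_empty_iff_forall_notMem] at h1 h2 ⊢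
  intro i
  have a := h1 i
  have b := h2 i
  simp only [P, M, supp, Finset.mem_filter, Finset.mem_univ, true_and] at a b ⊢
  revert a b
  generalize v i = t; revert t; decide

end OctTucker

/-- **Octahedral Tucker lemma.** Let `n ≥ 2`. The octahedral ball `Bⁿ` consists of all
pairs `(A,B)` of disjoint subsets of `[n]`. If `λ : Bⁿ → {1, ±2, …, ±n}` is antipodal,
i.e. `λ(∅,∅) = 1` and `λ(A,B) = -λ(B,A)` for all other pairs, then there exist two
complementary elements of `Bⁿ`: pairs `(A₁,B₁)`, `(A₂,B₂)` with `A₁ ⊆ A₂`, `B₁ ⊆ B₂`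
and `λ(A₁,B₁) = -λ(A₂,B₂)`. -/
theorem octahedral_tucker (n : ℕ) (hn : 2 ≤ n)
    (lam : Finset (Fin n) → Finset (Fin n) → ℤ)
    (hrange : ∀ A B : Finset (Fin n), Disjoint A B →
      1 ≤ (lam A B).natAbs ∧ (lam A B).natAbs ≤ n ∧ lam A B ≠ -1)
    (hone : lam ∅ ∅ = 1)
    (hanti : ∀ A B : Finset (Fin n), Disjoint A B → ¬(A = ∅ ∧ B = ∅) →
      lam A B = - lam B A) :
    ∃ A₁ B₁ A₂ B₂ : Finset (Fin n),
      Disjoint A₁ B₁ ∧ Disjoint A₂ B₂ ∧ A₁ ⊆ A₂ ∧ B₁ ⊆ B₂ ∧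
      lam A₁ B₁ = - lam A₂ B₂ := by
  by_contra hcon
  push Not at hcon
  let L : OctTucker.V n → ℤ := fun v => lam (OctTucker.P v) (OctTucker.M v)
  have hLE : ∀ x y : OctTucker.V n, OctTucker.LE' x y → L x ≠ - L y := fun x y h =>
    hcon _ _ _ _ (OctTucker.disj x) (OctTucker.disj y) (OctTucker.P_mono h) (OctTucker.M_mono h)
  have hNC : ∀ c, OctTucker.Good c → OctTucker.NC (c.map L) := by
    intro c hc a ha b hb
    obtain ⟨x, hx, rfl⟩ := List.mem_map.1 ha
    obtain ⟨y, hy, rfl⟩ := List.mem_map.1 hb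
    rcases hc.2 x hx y hy with h | h
    · exact hLE x y h
    · have := hLE y x h
      omega
  have hneg : ∀ x : OctTucker.V n, OctTucker.supp x ≠ ∅ → L (OctTucker.ng x) = - L x := by
    intro x hx
    have h1 := hanti _ _ (OctTucker.disj x) (OctTucker.PM_ne hx)
    simp only [L, OctTucker.P_ng, OctTucker.M_ng]
    omega
  have hG : ∀ c, OctTucker.Good c → OctTucker.delta (fun c => OctTucker.F (c.map L)) c
      = OctTucker.F (c.map L) + OctTucker.F ((c.map OctTucker.ng).map L) := by
    intro c hc
    rw [OctTucker.delta_map L c OctTucker.F, OctTucker.delta_F _ (hNC c hc)]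
    congr 2
    rw [List.map_map, List.map_map]
    apply List.map_congr_left
    intro x hx
    exact (hneg x (hc.1 x hx)).symm
  have h1 := OctTucker.N_eq (fun c => OctTucker.F (c.map L)) hG Finset.univ
  have h2 : OctTucker.N (fun c => OctTucker.F (c.map L)) Finset.univ = 0 := by
    unfold OctTucker.N
    refine Finset.sum_eq_zero (fun v hv => ?_)
    have hv' := (Finset.mem_filter.1 hv).2
    have hz : ∀ k : ℕ, ∀ v : OctTucker.V n, OctTucker.I k v (fun _ => 0) = 0 := by
      intro k
      induction k with
      | zero => intro v; rfl
      | succ k ih => intro v; simp [OctTucker.I, ih]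
    rw [← hz (Finset.univ : Finset (Fin n)).card v]
    apply OctTucker.I_congr
    · rw [hv']
    · intro c hc _ hlen
      apply OctTucker.F_zero n hn _ (hNC c hc) (by simpa using hlen)
      intro a ha
      obtain ⟨x, hx, rfl⟩ := List.mem_map.1 ha
      have r1 := hrange _ _ (OctTucker.disj x)
      have r2 := hrange _ _ (OctTucker.disj (OctTucker.ng x))
      have r3 := hneg x (hc.1 x hx)
      simp only [L] at r3 ⊢
      rw [r3] at r2
      omega
  rw [h2] at h1
  simp only [List.map_nil] at h1
  revert h1
  decide
end

section
/- (Truncated Tucker lemma) Let n ≥ 2k > 1. If λ : B^n_k → {±2k, …, ±n} is antipodal, then there exist two elements of B^n_k that are k-complementary with respect to λ. -/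
/-- `leastK k A` is the set `A_{≤k}` of the `k` least elements of `A`
(all of `A` if `|A| ≤ k`; in particular `∅_{≤k} = ∅`). -/
def leastK {n : ℕ} (k : ℕ) (A : Finset (Fin n)) : Finset (Fin n) :=
  ((A.sort (· ≤ ·)).take k).toFinset

/-- The relation `A₁ ≼ A₂` defined by `(A₁ ∪ A₂)_{≤k} = A₂`. -/
def precRel {n : ℕ} (k : ℕ) (A₁ A₂ : Finset (Fin n)) : Prop :=
  leastK k (A₁ ∪ A₂) = A₂

/-- Membership in the truncated octahedral ball `Bⁿ_k`: `A` and `B` are each a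
`k`-element subset of `[n]` or empty, are disjoint, and are not both empty. -/
def memBnk {n : ℕ} (k : ℕ) (A B : Finset (Fin n)) : Prop :=
  (A.card = k ∨ A = ∅) ∧ (B.card = k ∨ B = ∅) ∧ Disjoint A B ∧ ¬(A = ∅ ∧ B = ∅)

/-- The pair order `(A₁,B₁) ≼ (A₂,B₂)`: `A₁ ≼ A₂`, `B₁ ≼ B₂`, and `Aᵢ ∩ Bⱼ = ∅`
for all `i,j ∈ {1,2}`. -/
def precPair {n : ℕ} (k : ℕ) (A₁ B₁ A₂ B₂ : Finset (Fin n)) : Prop :=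
  precRel k A₁ A₂ ∧ precRel k B₁ B₂ ∧
    Disjoint A₁ B₁ ∧ Disjoint A₁ B₂ ∧ Disjoint A₂ B₁ ∧ Disjoint A₂ B₂

namespace TT

abbrev F2 := ZMod 2

lemma f2_self (a : F2) : a + a = 0 := CharTwo.add_self_eq_zero a

/-- Dual boundary: sum of `f` over all one-element deletions of a list. -/
def dsum {V : Type*} (f : List V → F2) : List V → F2
  | [] => 0
  | x :: L => f L + dsum (fun M => f (x :: M)) L

/-- Dual of the cone/prism operator in direction `t`. -/
def kd {V : Type*} (t : V → V) (e : V) (f : List V → F2) : List V → F2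
  | [] => f [e]
  | x :: L => f (t x :: x :: L) + kd t e (fun M => f (t x :: M)) L

lemma dsum_add {V : Type*} (L : List V) : ∀ f g : List V → F2,
    dsum (fun M => f M + g M) L = dsum f L + dsum g L := by
  induction L with
  | nil => intro f g; simp [dsum]
  | cons x L ih =>
    intro f g
    simp only [dsum]
    rw [ih (fun M => f (x :: M)) (fun M => g (x :: M))]
    ring

lemma dsum_zero {V : Type*} (L : List V) : dsum (fun _ => (0 : F2)) L = 0 := by
  induction L with
  | nil => simp [dsum]
  | cons x L ih => simp [dsum, ih]

lemma kd_add {V : Type*} (t : V → V) (e : V) (L : List V) : ∀ f g : List V → F2,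
    kd t e (fun M => f M + g M) L = kd t e f L + kd t e g L := by
  induction L with
  | nil => intro f g; simp [kd]
  | cons x L ih =>
    intro f g
    simp only [kd]
    rw [ih (fun M => f (t x :: M)) (fun M => g (t x :: M))]
    ring

/-- The homotopy identity. -/
lemma kd_dsum {V : Type*} (t : V → V) (e : V) (L : List V) : ∀ f : List V → F2,
    kd t e (dsum f) L = f L + dsum (kd t e f) L := by
  induction L with
  | nil => intro f; simp [kd, dsum]
  | cons x L ih =>
    intro f
    simp only [kd, dsum]
    rw [kd_add t e L (fun M => f M) (fun M => dsum (fun N => f (t x :: N)) M),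
      dsum_add L (fun M => f (t x :: x :: M)) (fun M => kd t e (fun N => f (t x :: N)) M)]
    have h := ih (fun N => f (t x :: N))
    rw [h]
    have h1 := f2_self (f (t x :: L))
    linear_combination h1

lemma dsum_map {V W : Type*} (h : V → W) (L : List V) : ∀ f : List W → F2,
    dsum (fun M => f (M.map h)) L = dsum f (L.map h) := by
  induction L with
  | nil => intro f; simp [dsum]
  | cons x L ih =>
    intro f
    simp only [dsum, List.map_cons]
    rw [ih (fun M => f (h x :: M))]

lemma dsum_perm {V : Type*} {L L' : List V} (hp : L.Perm L') : ∀ f : List V → F2,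
    (∀ M M' : List V, M.Perm M' → f M = f M') → dsum f L = dsum f L' := by
  induction hp with
  | nil => intro f _; rfl
  | cons x h ih =>
    intro f hf
    simp only [dsum]
    rw [hf _ _ h, ih _ (fun M M' hM => hf _ _ (hM.cons x))]
  | swap x y l =>
    intro f hf
    simp only [dsum]
    have : (fun M => f (y :: x :: M)) = (fun M => f (x :: y :: M)) := by
      funext M; exact hf _ _ (List.Perm.swap _ _ _)
    rw [this]; ring
  | trans _ _ ih1 ih2 => intro f hf; rw [ih1 f hf, ih2 f hf]

lemma dsum_congr {V : Type*} (L : List V) : ∀ f g : List V → F2,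
    (∀ M, M.Sublist L → f M = g M) → dsum f L = dsum g L := by
  induction L with
  | nil => intro f g _; rfl
  | cons x L ih =>
    intro f g h
    simp only [dsum]
    rw [h L (List.sublist_cons_self x L), ih _ _ (fun M hM => h _ (hM.cons_cons x))]

/-- Indicator that parities alternate, starting with `b`. -/
def cup : Bool → List ℕ → F2
  | _, [] => 1
  | b, x :: L => if (decide (x % 2 = 1)) = b then cup (!b) L else 0

lemma dsum_cup (L : List ℕ) : ∀ b, dsum (cup b) L = cup b L + cup (!b) L := by
  induction L with
  | nil => intro b; simp [dsum, cup, f2_self]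
  | cons x L ih =>
    intro b
    by_cases h : (decide (x % 2 = 1)) = b
    · have h2 : ¬ (decide (x % 2 = 1)) = !b := by rw [h]; cases b <;> simp
      simp only [dsum, cup, h2, if_false]
      simp only [h, if_true]
      rw [show (fun M => cup (!b) M) = cup (!b) from rfl, ih]
      simp only [Bool.not_not]
      linear_combination f2_self (cup b L)
    · have h2 : (decide (x % 2 = 1)) = !b := by
        revert h; cases b <;> cases (decide (x % 2 = 1)) <;> simp
      simp only [dsum, cup, h, if_false]
      simp only [h2, if_true, Bool.not_not, dsum_zero]
      ring

/-- `cup` of the sorted list. -/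
def P (b : Bool) (L : List ℕ) : F2 := cup b ((L : Multiset ℕ).sort (· ≤ ·))

lemma P_perm (b : Bool) (M M' : List ℕ) (h : M.Perm M') : P b M = P b M' := by
  unfold P; rw [Multiset.coe_eq_coe.mpr h]

lemma sort_sorted {M : List ℕ} (h : M.Pairwise (· ≤ ·)) :
    (M : Multiset ℕ).sort (· ≤ ·) = M := by
  apply List.Perm.eq_of_pairwise' (r := (· ≤ ·)) (Multiset.pairwise_sort _ _) h
  exact Multiset.coe_eq_coe.mp (Multiset.sort_eq _ _)

lemma P_sorted (b : Bool) {M : List ℕ} (h : M.Pairwise (· ≤ ·)) : P b M = cup b M := by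
  unfold P; rw [sort_sorted h]

lemma dsum_P (b : Bool) (L : List ℕ) : dsum (P b) L = P b L + P (!b) L := by
  set M := (L : Multiset ℕ).sort (· ≤ ·) with hM
  have hs : M.Pairwise (· ≤ ·) := Multiset.pairwise_sort _ _
  have hp : L.Perm M := Multiset.coe_eq_coe.mp (Multiset.sort_eq _ _).symm
  rw [dsum_perm hp _ (P_perm b), dsum_congr M (P b) (cup b)
    (fun N hN => P_sorted b (hs.sublist hN)), dsum_cup]
  rfl

def ng (c : ℕ) : ℕ := if c % 2 = 0 then c + 1 else c - 1

lemma ng_mod (c : ℕ) : (decide (ng c % 2 = 1)) = !(decide (c % 2 = 1)) := by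
  unfold ng
  rcases Nat.mod_two_eq_zero_or_one c with h | h
  · have : (c + 1) % 2 = 1 := by omega
    simp [h, this]
  · have : (c - 1) % 2 = 0 := by omega
    simp [h, this]

lemma cup_ng (L : List ℕ) : ∀ b, cup b (L.map ng) = cup (!b) L := by
  induction L with
  | nil => intro b; rfl
  | cons x L ih =>
    intro b
    simp only [List.map_cons, cup, ng_mod, ih]
    cases b <;> cases (decide (x % 2 = 1)) <;> simp

def NC (L : List ℕ) : Prop := ∀ x ∈ L, ∀ y ∈ L, x / 2 = y / 2 → x = y

lemma P_ng (b : Bool) (L : List ℕ) (h : NC L) : P b (L.map ng) = P (!b) L := by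
  set M := (L : Multiset ℕ).sort (· ≤ ·) with hM
  have hs : M.Pairwise (· ≤ ·) := Multiset.pairwise_sort _ _
  have hp : L.Perm M := Multiset.coe_eq_coe.mp (Multiset.sort_eq _ _).symm
  rw [P_perm b _ _ (hp.map ng), P_perm (!b) _ _ hp, P_sorted _ hs, P_sorted, cup_ng]
  rw [List.pairwise_map]
  refine hs.imp_of_mem ?_
  intro x y hx hy hxy
  have := h x (hp.mem_iff.mpr hx) y (hp.mem_iff.mpr hy)
  unfold ng
  split_ifs <;> omega

lemma cup_strict (L : List ℕ) : ∀ b, cup b L ≠ 0 → L.Pairwise (· ≤ ·) → NC L →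
    L.Pairwise (fun x y => x / 2 < y / 2) := by
  induction L with
  | nil => intros; simp
  | cons x L ih =>
    intro b hc hs hn
    have hb : (decide (x % 2 = 1)) = b := by
      by_contra hb; exact hc (by simp only [cup, hb, if_false])
    have hc' : cup (!b) L ≠ 0 := by simpa only [cup, hb, if_true] using hc
    rw [List.pairwise_cons] at hs ⊢
    have hn' : NC L := fun a ha c hcc => hn a (List.mem_cons_of_mem _ ha) c (List.mem_cons_of_mem _ hcc)
    have hL := ih _ hc' hs.2 hn'
    refine ⟨?_, hL⟩
    cases L with
    | nil => simp
    | cons y L =>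
      have hby : (decide (y % 2 = 1)) = !b := by
        by_contra hby; exact hc' (by simp only [cup, hby, if_false])
      have hxy := hs.1 y (by simp)
      have hne : x / 2 ≠ y / 2 := by
        intro he
        have := hn x (by simp) y (by simp) he
        subst this
        rw [hb] at hby; cases b <;> simp at hby
      have h1 : x / 2 < y / 2 := by omega
      intro w hw
      rcases List.mem_cons.mp hw with rfl | hw
      · exact h1
      · exact h1.trans ((List.pairwise_cons.mp hL).1 w hw)

lemma P_zero (b : Bool) (L : List ℕ) (S : Finset ℕ) (hS : ∀ x ∈ L, x / 2 ∈ S)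
    (hc : S.card < L.length) (h : NC L) : P b L = 0 := by
  by_contra hne
  set M := (L : Multiset ℕ).sort (· ≤ ·) with hM
  have hs : M.Pairwise (· ≤ ·) := Multiset.pairwise_sort _ _
  have hp : L.Perm M := Multiset.coe_eq_coe.mp (Multiset.sort_eq _ _).symm
  have h' : NC M := fun x hx y hy => h x (hp.mem_iff.mpr hx) y (hp.mem_iff.mpr hy)
  have := cup_strict M b hne hs h'
  have hnd : (M.map (· / 2)).Nodup := by
    rw [List.Nodup, List.pairwise_map]
    exact this.imp (fun h => h.ne)
  have hsub : (M.map (· / 2)).toFinset ⊆ S := by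
    intro a ha
    simp only [List.mem_toFinset, List.mem_map] at ha
    obtain ⟨x, hx, rfl⟩ := ha
    exact hS x (hp.mem_iff.mpr hx)
  have h2 := Finset.card_le_card hsub
  rw [List.toFinset_card_of_nodup hnd, List.length_map, ← hp.length_eq] at h2
  omega

/-- Integer labels coded as naturals: absolute value first, then sign. -/
def gc (l : ℤ) : ℕ := 2 * l.natAbs + (if 0 < l then 1 else 0)

lemma gc_div (l : ℤ) : gc l / 2 = l.natAbs := by
  unfold gc; split_ifs <;> omega

lemma gc_neg (l : ℤ) (h : l ≠ 0) : gc (-l) = ng (gc l) := by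
  unfold gc ng; split_ifs <;> omega

section Tucker

variable {n : ℕ}

abbrev SV (n : ℕ) := Finset (Fin n) × Finset (Fin n)

def plus (i : Fin n) (x : SV n) : SV n := (insert i x.1, x.2)

/-- Nonzero sign vectors. -/
def Ok (x : SV n) : Prop := Disjoint x.1 x.2 ∧ ¬ (x.1 = ∅ ∧ x.2 = ∅)

def Bd (d : ℕ) (x : SV n) : Prop := (∀ i ∈ x.1, i.val < d) ∧ (∀ i ∈ x.2, i.val < d)

def Good (d : ℕ) (L : List (SV n)) : Prop :=
  L.Pairwise (fun x y => y ≤ x) ∧ ∀ x ∈ L, Ok x ∧ Bd d x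

lemma Ok.swap {x : SV n} (h : Ok x) : Ok x.swap := ⟨h.1.symm, fun h' => h.2 ⟨h'.2, h'.1⟩⟩

lemma good_swap {d : ℕ} {L : List (SV n)} (h : Good d L) : Good d (L.map Prod.swap) := by
  refine ⟨?_, ?_⟩
  · rw [List.pairwise_map]
    exact h.1.imp (fun hxy => ⟨hxy.2, hxy.1⟩)
  · intro x hx
    obtain ⟨y, hy, rfl⟩ := List.mem_map.mp hx
    have := h.2 y hy
    exact ⟨this.1.swap, this.2.2, this.2.1⟩

lemma Bd.mono {d : ℕ} {x : SV n} (h : Bd d x) : Bd (d + 1) x :=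
  ⟨fun i hi => (h.1 i hi).trans (Nat.lt_succ_self d), fun i hi => (h.2 i hi).trans (Nat.lt_succ_self d)⟩

lemma plus_ok {d : ℕ} {i : Fin n} (hi : i.val = d) {x : SV n} (hb : Bd d x)
    (hd : Disjoint x.1 x.2) : Ok (plus i x) ∧ Bd (d + 1) (plus i x) := by
  refine ⟨⟨?_, ?_⟩, ?_, ?_⟩
  · simp only [plus, Finset.disjoint_insert_left]
    refine ⟨fun h => ?_, hd⟩
    have := hb.2 i h; omega
  · rintro ⟨h, _⟩
    simp [plus] at h
  · intro j hj
    simp only [plus, Finset.mem_insert] at hj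
    rcases hj with rfl | hj
    · omega
    · have := hb.1 j hj; omega
  · intro j hj
    have := hb.2 j hj; omega

lemma le_plus (i : Fin n) (x : SV n) : x ≤ plus i x := ⟨Finset.subset_insert _ _, le_rfl⟩

lemma plus_mono (i : Fin n) {x y : SV n} (h : x ≤ y) : plus i x ≤ plus i y :=
  ⟨Finset.insert_subset_insert _ h.1, h.2⟩

def ev (i : Fin n) : SV n := ({i}, ∅)

lemma ev_le (i : Fin n) (x : SV n) : ev i ≤ plus i x := by
  refine ⟨?_, ?_⟩ <;> simp [ev, plus]

lemma kd_congr {d : ℕ} {i : Fin n} (hi : i.val = d) (L : List (SV n)) :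
    ∀ (f g : List (SV n) → F2) (X : SV n), (∀ x ∈ L, x ≤ X) → Good d L →
    (∀ M, M.length = L.length + 1 → Good (d + 1) M → (∀ x ∈ M, x ≤ plus i X) → f M = g M) →
    kd (plus i) (ev i) f L = kd (plus i) (ev i) g L := by
  induction L with
  | nil =>
    intro f g X _ _ h
    simp only [kd]
    apply h
    · simp
    · refine ⟨by simp, ?_⟩
      intro x hx
      rw [List.mem_singleton] at hx
      subst hx
      exact plus_ok (x := (∅, ∅)) hi ⟨by simp, by simp⟩ (by simp)
    · intro x hx
      rw [List.mem_singleton] at hx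
      subst hx
      exact ev_le i X
  | cons y L ih =>
    intro f g X hX hG h
    have hy := hG.2 y (by simp)
    have hpy := plus_ok hi hy.2 hy.1.1
    have hyX := hX y (by simp)
    have hp := List.pairwise_cons.mp hG.1
    simp only [kd]
    congr 1
    · apply h
      · simp
      · refine ⟨?_, ?_⟩
        · rw [List.pairwise_cons]
          refine ⟨?_, hG.1⟩
          intro x hx
          rcases List.mem_cons.mp hx with rfl | hx
          · exact le_plus i x
          · exact (hp.1 x hx).trans (le_plus i y)
        · intro x hx
          rcases List.mem_cons.mp hx with rfl | hx
          · exact hpy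
          · exact ⟨(hG.2 x hx).1, (hG.2 x hx).2.mono⟩
      · intro x hx
        rcases List.mem_cons.mp hx with rfl | hx
        · exact plus_mono i hyX
        · exact (hX x hx).trans (le_plus i X)
    · apply ih _ _ y hp.1 ⟨hp.2, fun x hx => hG.2 x (List.mem_cons_of_mem _ hx)⟩
      intro M hl hM hMy
      apply h
      · simp [hl]
      · refine ⟨List.pairwise_cons.mpr ⟨hMy, hM.1⟩, ?_⟩
        intro x hx
        rcases List.mem_cons.mp hx with rfl | hx
        · exact hpy
        · exact hM.2 x hx
      · intro x hx
        rcases List.mem_cons.mp hx with rfl | hx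
        · exact plus_mono i hyX
        · exact (hMy x hx).trans (plus_mono i hyX)

variable (e : ℕ → Fin n)

def K (d : ℕ) (f : List (SV n) → F2) : List (SV n) → F2 := kd (plus (e d)) (ev (e d)) f

def sw (f : List (SV n) → F2) : List (SV n) → F2 := fun L => f (L.map Prod.swap)

/-- The fundamental cycle of the `d`-th sphere, as a functional on cochains. -/
def z : ℕ → (List (SV n) → F2) → F2
  | 0, f => f []
  | d + 1, f => z d (K e d f) + z d (K e d (sw f))

lemma sw_sw (f : List (SV n) → F2) : sw (sw f) = f := by
  funext L
  simp [sw]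

lemma z_add (d : ℕ) : ∀ f g : List (SV n) → F2,
    z e d (fun M => f M + g M) = z e d f + z e d g := by
  induction d with
  | zero => intro f g; rfl
  | succ d ih =>
    intro f g
    have h1 : K e d (fun M => f M + g M) = fun M => K e d f M + K e d g M := by
      funext M; exact kd_add _ _ M f g
    have h2 : K e d (sw (fun M => f M + g M)) = fun M => K e d (sw f) M + K e d (sw g) M := by
      funext M; exact kd_add _ _ M (sw f) (sw g)
    simp only [z]
    rw [h1, h2, ih, ih]; ring

lemma z_sw (d : ℕ) (f : List (SV n) → F2) : z e d (sw f) = z e d f := by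
  cases d with
  | zero => simp [z, sw]
  | succ d => simp only [z]; rw [sw_sw]; ring

lemma K_dsum (d : ℕ) (f : List (SV n) → F2) :
    K e d (dsum f) = fun L => f L + dsum (K e d f) L := by
  funext L; exact kd_dsum _ _ L f

lemma sw_dsum (f : List (SV n) → F2) : sw (dsum f) = dsum (sw f) := by
  funext L; exact (dsum_map Prod.swap L f).symm

lemma z_dsum (d : ℕ) : ∀ f : List (SV n) → F2, z e d (dsum f) = 0 := by
  induction d with
  | zero => intro f; simp [z, dsum]
  | succ d ih =>
    intro f
    simp only [z]
    rw [sw_dsum, K_dsum, K_dsum, z_add, z_add, ih, ih, z_sw]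
    simp [f2_self]

lemma K_congr (he : ∀ d, d < n → (e d).val = d) {d : ℕ} (hd : d < n) (f g : List (SV n) → F2)
    (h : ∀ M, M.length = d + 1 → Good (d + 1) M → f M = g M)
    (L : List (SV n)) (hl : L.length = d) (hL : Good d L) : K e d f L = K e d g L :=
  kd_congr (he d hd) L f g (Finset.univ, Finset.univ)
    (fun x _ => ⟨Finset.subset_univ _, Finset.subset_univ _⟩) hL
    (fun M hM hG _ => h M (by omega) hG)

lemma z_congr (he : ∀ d, d < n → (e d).val = d) (d : ℕ) (hd : d ≤ n) : ∀ f g : List (SV n) → F2,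
    (∀ M, M.length = d → Good d M → f M = g M) → z e d f = z e d g := by
  induction d with
  | zero => intro f g h; exact h [] rfl ⟨by simp, by simp⟩
  | succ d ih =>
    intro f g h
    simp only [z]
    congr 1
    · exact ih (by omega) _ _ (K_congr e he (by omega) f g h)
    · refine ih (by omega) _ _ (K_congr e he (by omega) _ _ ?_)
      intro M hM hG
      exact h _ (by simpa using hM) (good_swap hG)

end Tucker

/-- Octahedral Tucker lemma. -/
theorem tucker (n : ℕ) (hn : 0 < n) (lam : SV n → ℤ) (S : Finset ℕ) (hS : S.card < n)
    (h0 : ∀ x, Ok x → lam x ≠ 0)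
    (hr : ∀ x, Ok x → (lam x).natAbs ∈ S)
    (ha : ∀ x, Ok x → lam x.swap = - lam x) :
    ∃ x y : SV n, Ok x ∧ Ok y ∧ x ≤ y ∧ lam x = - lam y := by
  by_contra hno
  push Not at hno
  let e : ℕ → Fin n := fun d => ⟨d % n, Nat.mod_lt _ hn⟩
  have he : ∀ d, d < n → (e d).val = d := fun d hd => Nat.mod_eq_of_lt hd
  let c : SV n → ℕ := fun x => gc (lam x)
  let p : Bool → List (SV n) → F2 := fun b L => P b (L.map c)
  have hnc : ∀ d (L : List (SV n)), Good d L → NC (L.map c) := by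
    intro d L hL x hx y hy hxy
    obtain ⟨u, hu, rfl⟩ := List.mem_map.mp hx
    obtain ⟨v, hv, rfl⟩ := List.mem_map.mp hy
    simp only [c, gc_div] at hxy
    have hou := (hL.2 u hu).1
    have hov := (hL.2 v hv).1
    have hcmp : u ≤ v ∨ v ≤ u := by
      have hp : L.Pairwise (fun a b => a ≤ b ∨ b ≤ a) := hL.1.imp (fun h => Or.inr h)
      by_cases huv : u = v
      · exact Or.inl huv.le
      · have : Std.Symm (fun a b : SV n => a ≤ b ∨ b ≤ a) := ⟨fun _ _ h => h.symm⟩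
        exact hp.forall hu hv huv
    rcases Int.natAbs_eq_natAbs_iff.mp hxy with h | h
    · simp only [c, h]
    · rcases hcmp with h' | h'
      · exact absurd h (hno u v hou hov h')
      · exact absurd (by omega) (hno v u hov hou h')
  have hsw : ∀ d (L : List (SV n)), Good d L → p true (L.map Prod.swap) = p false L := by
    intro d L hL
    have : (L.map Prod.swap).map c = (L.map c).map ng := by
      simp only [List.map_map]
      apply List.map_congr_left
      intro x hx
      have hx := (hL.2 x hx).1
      simp only [Function.comp, c, ha x hx]
      exact gc_neg _ (h0 x hx)
    simp only [p]
    rw [this, P_ng _ _ (hnc d L hL)]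
    rfl
  have hd : ∀ L, dsum (p true) L = p true L + p false L := by
    intro L
    simp only [p]
    rw [dsum_map c L (P true), dsum_P]
    rfl
  have hz : ∀ d, d ≤ n → z e d (p true) = 1 := by
    intro d
    induction d with
    | zero => intro _; simp [z, p, P, cup]
    | succ d ih =>
      intro hdn
      have h1 : z e (d + 1) (p true) =
          z e d (K e d (fun L => p true L + sw (p true) L)) := by
        have : K e d (fun L => p true L + sw (p true) L)
            = fun L => K e d (p true) L + K e d (sw (p true)) L := by
          funext L; exact kd_add _ _ L _ _
        rw [this, z_add]; rfl
      have h2 : z e d (K e d (fun L => p true L + sw (p true) L))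
          = z e d (K e d (dsum (p true))) := by
        apply z_congr e he d (by omega)
        apply K_congr e he (by omega)
        intro M _ hM
        rw [hd, ← hsw _ M hM]; rfl
      rw [h1, h2, K_dsum, z_add, z_dsum, ih (by omega), add_zero]
  have h1 := hz n le_rfl
  have h2 : z e n (p true) = z e n (fun _ => 0) := by
    apply z_congr e he n le_rfl
    intro M hM hG
    apply P_zero _ _ S _ (by simpa [hM] using hS) (hnc n M hG)
    intro x hx
    obtain ⟨u, hu, rfl⟩ := List.mem_map.mp hx
    simp only [c, gc_div]
    exact hr u (hG.2 u hu).1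
  have h3 : z e n (fun _ => 0) = 0 := by
    have := z_add e n (fun _ => 0) (fun _ => 0)
    simpa using this
  rw [h2, h3] at h1
  exact absurd h1 (by decide)

/-! Truncation. -/

lemma leastK_sub {n : ℕ} (k : ℕ) (A : Finset (Fin n)) : leastK k A ⊆ A := by
  intro x hx
  unfold leastK at hx
  rw [List.mem_toFinset] at hx
  simpa using List.mem_of_mem_take hx

lemma leastK_card {n : ℕ} (k : ℕ) (A : Finset (Fin n)) (h : k ≤ A.card) :
    (leastK k A).card = k := by
  unfold leastK
  rw [List.toFinset_card_of_nodup]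
  · simp [h]
  · exact (A.sort_nodup (· ≤ ·)).sublist (List.take_sublist _ _)

lemma leastK_lt {n : ℕ} (k : ℕ) (A : Finset (Fin n)) (x y : Fin n) (hx : x ∈ leastK k A)
    (hy : y ∈ A) (hy' : y ∉ leastK k A) : x < y := by
  unfold leastK at hx hy'
  rw [List.mem_toFinset] at hx hy'
  have hyl : y ∈ A.sort (· ≤ ·) := by simpa using hy
  rw [← List.take_append_drop k (A.sort (· ≤ ·)), List.mem_append] at hyl
  have hyd := hyl.resolve_left hy'
  have hs : (A.sort (· ≤ ·)).Pairwise (· ≤ ·) := Finset.pairwise_sort _ _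
  rw [← List.take_append_drop k (A.sort (· ≤ ·)), List.pairwise_append] at hs
  refine lt_of_le_of_ne (hs.2.2 x hx y hyd) ?_
  rintro rfl
  exact hy' hx

lemma leastK_mid {n : ℕ} (k : ℕ) (A U : Finset (Fin n)) (h : k ≤ A.card)
    (h1 : leastK k A ⊆ U) (h2 : U ⊆ A) : leastK k U = leastK k A := by
  have cA := leastK_card k A h
  have cU := leastK_card k U (by rw [← cA]; exact Finset.card_le_card h1)
  apply Finset.eq_of_subset_of_card_le _ (by omega)
  intro x hx
  by_contra hxT
  have : ¬ leastK k A ⊆ leastK k U := by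
    intro hs
    have := Finset.eq_of_subset_of_card_le hs (by omega)
    rw [this] at hxT
    exact hxT hx
  obtain ⟨y, hy, hyU⟩ := Finset.not_subset.mp this
  have a := leastK_lt k A y x hy (h2 (leastK_sub k U hx)) hxT
  have b := leastK_lt k U x y hx (h1 hy) hyU
  exact absurd a (not_lt.mpr b.le)

def tr {n : ℕ} (k : ℕ) (A : Finset (Fin n)) : Finset (Fin n) :=
  if k ≤ A.card then leastK k A else ∅

lemma tr_sub {n : ℕ} (k : ℕ) (A : Finset (Fin n)) : tr k A ⊆ A := by
  unfold tr; split_ifs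
  · exact leastK_sub k A
  · simp

lemma tr_card {n : ℕ} (k : ℕ) (A : Finset (Fin n)) : (tr k A).card = k ∨ tr k A = ∅ := by
  unfold tr; split_ifs with h
  · exact Or.inl (leastK_card k A h)
  · simp

lemma tr_prec {n : ℕ} (k : ℕ) {A B : Finset (Fin n)} (h : A ⊆ B) :
    precRel k (tr k A) (tr k B) := by
  unfold precRel
  by_cases hB : k ≤ B.card
  · have : tr k B = leastK k B := by simp [tr, hB]
    rw [this]
    apply leastK_mid k B _ hB Finset.subset_union_right
    exact Finset.union_subset ((tr_sub k A).trans h) (leastK_sub k B)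
  · have hA : ¬ k ≤ A.card := fun h' => hB (h'.trans (Finset.card_le_card h))
    simp [tr, hA, hB, leastK]

lemma tr_mem {n k : ℕ} (hk : 1 ≤ k) {A B : Finset (Fin n)} (hd : Disjoint A B)
    (h : k ≤ A.card ∨ k ≤ B.card) : memBnk k (tr k A) (tr k B) := by
  refine ⟨tr_card k A, tr_card k B, hd.mono (tr_sub k A) (tr_sub k B), ?_⟩
  rintro ⟨h1, h2⟩
  rcases h with h | h
  · have := leastK_card k A h
    simp only [tr, h, if_true] at h1
    rw [h1] at this; simp at this; omega
  · have := leastK_card k B h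
    simp only [tr, h, if_true] at h2
    rw [h2] at this; simp at this; omega

end TT

/-- **Truncated Tucker lemma.** Let `n ≥ 2k > 1`. If `λ : Bⁿ_k → {±2k, …, ±n}` is
antipodal, i.e. `λ(A,B) = -λ(B,A)` for all `(A,B) ∈ Bⁿ_k`, then there exist two
`k`-complementary elements of `Bⁿ_k`: pairs with `(A₁,B₁) ≼ (A₂,B₂)` and
`λ(A₁,B₁) = -λ(A₂,B₂)`. -/
theorem truncated_tucker (n k : ℕ) (hk : 1 ≤ k) (hn : 2 * k ≤ n)
    (lam : Finset (Fin n) → Finset (Fin n) → ℤ)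
    (hrange : ∀ A B : Finset (Fin n), memBnk k A B →
      2 * k ≤ (lam A B).natAbs ∧ (lam A B).natAbs ≤ n)
    (hanti : ∀ A B : Finset (Fin n), memBnk k A B → lam A B = - lam B A) :
    ∃ A₁ B₁ A₂ B₂ : Finset (Fin n),
      memBnk k A₁ B₁ ∧ memBnk k A₂ B₂ ∧ precPair k A₁ B₁ A₂ B₂ ∧
      lam A₁ B₁ = - lam A₂ B₂ := by
  classical
  let sg : Finset (Fin n) → Finset (Fin n) → ℤ := fun A B =>
    if Encodable.encode A < Encodable.encode B then -1 else 1
  let big : TT.SV n → Prop := fun x => k ≤ x.1.card ∨ k ≤ x.2.card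
  let L : TT.SV n → ℤ := fun x =>
    if big x then lam (TT.tr k x.1) (TT.tr k x.2)
    else sg x.1 x.2 * ((x.1.card + x.2.card : ℕ) : ℤ)
  have hsg : ∀ A B, (sg A B).natAbs = 1 := by
    intro A B; simp only [sg]; split_ifs <;> rfl
  have hbig : ∀ x, big x → L x = lam (TT.tr k x.1) (TT.tr k x.2) := by
    intro x hx; simp only [L, hx, if_true]
  have hsmall : ∀ x, ¬ big x → L x = sg x.1 x.2 * ((x.1.card + x.2.card : ℕ) : ℤ) := by
    intro x hx; simp only [L, hx, if_false]
  have hsmallabs : ∀ x, ¬ big x → (L x).natAbs = x.1.card + x.2.card := by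
    intro x hx; rw [hsmall x hx, Int.natAbs_mul, hsg]; simp only [Int.natAbs_natCast, one_mul]
  have hpos : ∀ x : TT.SV n, TT.Ok x → 0 < x.1.card + x.2.card := by
    intro x hx
    by_contra h
    apply hx.2
    constructor <;> rw [← Finset.card_eq_zero] <;> omega
  have hsmallle : ∀ x, ¬ big x → x.1.card + x.2.card ≤ 2 * k - 2 := by
    intro x hx; simp only [big, not_or, not_le] at hx; omega
  have hbigabs : ∀ x, TT.Ok x → big x → 2 * k ≤ (L x).natAbs ∧ (L x).natAbs ≤ n := by
    intro x hx hb
    rw [hbig x hb]; exact hrange _ _ (TT.tr_mem hk hx.1 hb)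
  have h0 : ∀ x, TT.Ok x → L x ≠ 0 := by
    intro x hx h
    by_cases hb : big x
    · have := hbigabs x hx hb; rw [h] at this; simp at this; omega
    · have h1 := hsmallabs x hb
      have h2 := hpos x hx
      rw [h] at h1; simp at h1; omega
  obtain ⟨x, y, hx, hy, hxy, hl⟩ := TT.tucker n (by omega) L
    ((Finset.Icc 1 n).erase (2 * k - 1))
    (by
      rw [Finset.card_erase_of_mem (by rw [Finset.mem_Icc]; omega)]
      simp; omega)
    h0
    (by
      intro x hx
      rw [Finset.mem_erase, Finset.mem_Icc]
      by_cases hb : big x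
      · have := hbigabs x hx hb; omega
      · have h1 := hsmallabs x hb
        have h2 := hpos x hx
        have h3 := hsmallle x hb
        omega)
    (by
      intro x hx
      by_cases hb : big x
      · have hb' : big x.swap := hb.symm
        rw [hbig x hb, hbig _ hb']
        exact hanti _ _ (TT.tr_mem hk hx.1.symm hb.symm)
      · have hb' : ¬ big x.swap := fun h => hb h.symm
        rw [hsmall x hb, hsmall _ hb']
        have hne : Encodable.encode x.1 ≠ Encodable.encode x.2 := by
          intro h
          have h := Encodable.encode_injective h
          have h1 := hx.1
          rw [h, disjoint_self] at h1
          exact hx.2 ⟨by rw [h]; exact h1, h1⟩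
        have : sg x.2 x.1 = - sg x.1 x.2 := by
          simp only [sg]; split_ifs <;> omega
        simp only [Prod.fst_swap, Prod.snd_swap]
        rw [this, Nat.add_comm]; ring)
  have habs : (L x).natAbs = (L y).natAbs := by rw [hl, Int.natAbs_neg]
  by_cases hbx : big x
  · by_cases hby : big y
    · rw [hbig x hbx, hbig y hby] at hl
      refine ⟨_, _, _, _, TT.tr_mem hk hx.1 hbx, TT.tr_mem hk hy.1 hby, ?_, hl⟩
      have sx1 := (TT.tr_sub k x.1).trans hxy.1
      have sx2 := (TT.tr_sub k x.2).trans hxy.2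
      have sy1 := TT.tr_sub k y.1
      have sy2 := TT.tr_sub k y.2
      exact ⟨TT.tr_prec k hxy.1, TT.tr_prec k hxy.2, hy.1.mono sx1 sx2, hy.1.mono sx1 sy2,
        hy.1.mono sy1 sx2, hy.1.mono sy1 sy2⟩
    · have h1 := hbigabs x hx hbx
      have h2 := hsmallabs y hby
      have h3 := hsmallle y hby
      omega
  · by_cases hby : big y
    · have h1 := hbigabs y hy hby
      have h2 := hsmallabs x hbx
      have h3 := hsmallle x hbx
      omega
    · exfalso
      rw [hsmallabs x hbx, hsmallabs y hby] at habs
      have c1 := Finset.card_le_card hxy.1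
      have c2 := Finset.card_le_card hxy.2
      have e1 := Finset.eq_of_subset_of_card_le hxy.1 (by omega)
      have e2 := Finset.eq_of_subset_of_card_le hxy.2 (by omega)
      have : x = y := Prod.ext e1 e2
      rw [this] at hl
      exact h0 y hy (by omega)
end

section
/- Let k ≥ 1 and n ≥ 3k + 3. There is an (n−2k+2)-coloring of the (n,k)-Kneser graph which has at least k − 1 color classes that are nonempty and not star-shaped, and hence at most n − 3k + 3 star-shaped nonempty color classes. -/
/-- The set `S` may get color `l`: colors `l < k` belong to triples `{3l-2,3l-1,3l}`, of which `S`
must contain two elements, the other colors belong to single elements. -/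
def KGood (k : ℕ) (S : Finset ℕ) (l : ℕ) : Prop :=
  (1 ≤ l ∧ l < k ∧ ∃ x ∈ S, ∃ y ∈ S, x < y ∧ 3 * l ≤ x + 2 ∧ y ≤ 3 * l) ∨
    (k ≤ l ∧ l + 2 * (k - 1) ∈ S)

/-- The least admissible color. -/
noncomputable def kcol (k : ℕ) (S : Finset ℕ) : ℕ := sInf {l | KGood k S l}

theorem kgood_exists (n k : ℕ) (hk : 1 ≤ k) (S : Finset ℕ)
    (hS : S ⊆ Finset.Icc 1 n) (hc : S.card = k) : ∃ l, KGood k S l := by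
  by_cases h : ∃ x ∈ S, 3 * k - 2 ≤ x
  · obtain ⟨x, hx, hx2⟩ := h
    refine ⟨x - 2 * (k - 1), Or.inr ⟨by omega, ?_⟩⟩
    have : x - 2 * (k - 1) + 2 * (k - 1) = x := by omega
    rwa [this]
  · push Not at h
    have hm : ∀ a ∈ S, (a + 2) / 3 ∈ Finset.Icc 1 (k - 1) := by
      intro a ha
      have h1 := Finset.mem_Icc.1 (hS ha)
      have h2 := h a ha
      rw [Finset.mem_Icc]
      omega
    obtain ⟨x, hx, y, hy, hne, he⟩ := Finset.exists_ne_map_eq_of_card_lt_of_maps_to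
      (s := S) (t := Finset.Icc 1 (k - 1)) (by rw [hc, Nat.card_Icc]; omega) hm
    have h1 := Finset.mem_Icc.1 (hm x hx)
    refine ⟨(x + 2) / 3, Or.inl ⟨h1.1, by omega, ?_⟩⟩
    rcases lt_or_gt_of_ne hne with hlt | hlt
    · exact ⟨x, hx, y, hy, hlt, by omega, by omega⟩
    · exact ⟨y, hy, x, hx, hlt, by omega, by omega⟩

theorem kcol_good (n k : ℕ) (hk : 1 ≤ k) (S : Finset ℕ)
    (hS : S ⊆ Finset.Icc 1 n) (hc : S.card = k) : KGood k S (kcol k S) :=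
  Nat.sInf_mem (s := {l | KGood k S l}) (kgood_exists n k hk S hS hc)

theorem kgood_disj (k l : ℕ) (S T : Finset ℕ) (hd : Disjoint S T)
    (h1 : KGood k S l) (h2 : KGood k T l) : False := by
  rw [Finset.disjoint_left] at hd
  rcases h1 with ⟨_, hl, x, hx, y, hy, _, _, _⟩ | ⟨hl, hx⟩
  · rcases h2 with ⟨_, _, z, hz, w, hw, _, _, _⟩ | ⟨_, _⟩
    · have a1 : x ≠ z := fun e => hd hx (e ▸ hz)
      have a2 : x ≠ w := fun e => hd hx (e ▸ hw)
      have a3 : y ≠ z := fun e => hd hy (e ▸ hz)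
      have a4 : y ≠ w := fun e => hd hy (e ▸ hw)
      omega
    · omega
  · rcases h2 with ⟨_, _, _⟩ | ⟨_, hz⟩
    · omega
    · exact hd hx hz

/-- Witness sets: `{3j-p, 3j-q}` and `3t-r` for the other `t < k`. -/
def kwit (k j r p q : ℕ) : Finset ℕ :=
  insert (3 * j - p) (insert (3 * j - q)
    (((Finset.Icc 1 (k - 1)).erase j).image (fun t => 3 * t - r)))

theorem mem_kwit (k j r p q x : ℕ) : x ∈ kwit k j r p q ↔
    x = 3 * j - p ∨ x = 3 * j - q ∨ ∃ t, (t ≠ j ∧ 1 ≤ t ∧ t ≤ k - 1) ∧ 3 * t - r = x := by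
  simp [kwit]

theorem kwit_spec (n k j r p q : ℕ) (hn : 3 * k + 3 ≤ n) (hj : 1 ≤ j) (hjk : j < k)
    (hr : r ≤ 2) (hp : p ≤ 2) (hq : q ≤ 2) (hpq : q < p) :
    kwit k j r p q ⊆ Finset.Icc 1 n ∧ (kwit k j r p q).card = k ∧
      kcol k (kwit k j r p q) = j := by
  refine ⟨?_, ?_, ?_⟩
  · intro x hx
    rw [Finset.mem_Icc]
    rcases (mem_kwit ..).1 hx with h | h | ⟨t, h, h'⟩ <;> omega
  · unfold kwit
    rw [Finset.card_insert_of_notMem, Finset.card_insert_of_notMem,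
      Finset.card_image_of_injOn, Finset.card_erase_of_mem, Nat.card_Icc]
    · omega
    · rw [Finset.mem_Icc]; omega
    · intro a ha b hb hab
      simp at ha hb hab
      omega
    · simp only [Finset.mem_image, Finset.mem_erase, Finset.mem_Icc, not_exists]
      intro t ht
      omega
    · simp only [Finset.mem_insert, Finset.mem_image, Finset.mem_erase, Finset.mem_Icc, not_or,
        not_exists]
      refine ⟨by omega, ?_⟩
      intro t ht
      omega
  · have hg : KGood k (kwit k j r p q) j :=
      Or.inl ⟨hj, hjk, 3 * j - p, by rw [mem_kwit]; exact Or.inl rfl, 3 * j - q,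
        by rw [mem_kwit]; exact Or.inr (Or.inl rfl), by omega, by omega, by omega⟩
    apply le_antisymm
    · exact Nat.sInf_le hg
    · apply le_csInf ⟨j, hg⟩
      intro l hl
      by_contra hlt
      push Not at hlt
      rcases hl with ⟨h1, h2, x, hx, y, hy, hxy, h3, h4⟩ | ⟨h1, h2⟩
      · rw [mem_kwit] at hx hy
        rcases hx with h | h | ⟨t, h, h'⟩ <;> rcases hy with g | g | ⟨s, g, g'⟩ <;> omega
      · omega

theorem kwit_star (k j i : ℕ) (hj : 1 ≤ j) 
    (h0 : i ∈ kwit k j 0 2 1) (h1 : i ∈ kwit k j 1 2 0) (h2 : i ∈ kwit k j 2 1 0) : False := by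
  rw [mem_kwit] at h0 h1 h2
  rcases h0 with h | h | ⟨t, h, h'⟩ <;> rcases h1 with g | g | ⟨s, g, g'⟩ <;>
    rcases h2 with f | f | ⟨u, f, f'⟩ <;> omega

open Classical in
/-- For `k ≥ 1` and `n ≥ 3k+3`, there is an `(n-2k+2)`-coloring of the `(n,k)`-Kneser
graph having at least `k-1` color classes that are nonempty and not star-shaped, and
hence at most `n-3k+3` nonempty star-shaped color classes. -/
theorem coloring_with_few_starShaped (n k : ℕ) (hk : 1 ≤ k) (hn : 3 * k + 3 ≤ n) :
    ∃ c : Finset ℕ → ℕ,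
      (∀ S : Finset ℕ, S ⊆ Finset.Icc 1 n → S.card = k →
        c S ∈ Finset.Icc 1 (n - 2 * k + 2)) ∧
      (∀ S T : Finset ℕ, S ⊆ Finset.Icc 1 n → T ⊆ Finset.Icc 1 n →
        S.card = k → T.card = k → Disjoint S T → c S ≠ c T) ∧
      k - 1 ≤ ((Finset.Icc 1 (n - 2 * k + 2)).filter (fun ℓ =>
        (∃ S : Finset ℕ, S ⊆ Finset.Icc 1 n ∧ S.card = k ∧ c S = ℓ) ∧
        ¬ ∃ i : ℕ, ∀ S : Finset ℕ, S ⊆ Finset.Icc 1 n → S.card = k →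
          c S = ℓ → i ∈ S)).card ∧
      ((Finset.Icc 1 (n - 2 * k + 2)).filter (fun ℓ =>
        (∃ S : Finset ℕ, S ⊆ Finset.Icc 1 n ∧ S.card = k ∧ c S = ℓ) ∧
        ∃ i : ℕ, ∀ S : Finset ℕ, S ⊆ Finset.Icc 1 n → S.card = k →
          c S = ℓ → i ∈ S)).card ≤ n - 3 * k + 3 := by
  have hA : ∀ S : Finset ℕ, S ⊆ Finset.Icc 1 n → S.card = k →
        kcol k S ∈ Finset.Icc 1 (n - 2 * k + 2) := by
    intro S hS hc
    rw [Finset.mem_Icc]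
    rcases kcol_good n k hk S hS hc with ⟨h1, h2, _⟩ | ⟨h1, h2⟩
    · omega
    · have := Finset.mem_Icc.1 (hS h2)
      omega
  have hC : k - 1 ≤ ((Finset.Icc 1 (n - 2 * k + 2)).filter (fun ℓ =>
        (∃ S : Finset ℕ, S ⊆ Finset.Icc 1 n ∧ S.card = k ∧ kcol k S = ℓ) ∧
        ¬ ∃ i : ℕ, ∀ S : Finset ℕ, S ⊆ Finset.Icc 1 n → S.card = k →
          kcol k S = ℓ → i ∈ S)).card := by
    have : (Finset.Icc 1 (k - 1)).card = k - 1 := by simp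
    rw [← this]
    rw [this]
    refine this.symm.le.trans (Finset.card_le_card ?_)
    intro j hj
    rw [Finset.mem_Icc] at hj
    have w0 := kwit_spec n k j 0 2 1 hn hj.1 (by omega) (by omega) (by omega) (by omega) (by omega)
    have w1 := kwit_spec n k j 1 2 0 hn hj.1 (by omega) (by omega) (by omega) (by omega) (by omega)
    have w2 := kwit_spec n k j 2 1 0 hn hj.1 (by omega) (by omega) (by omega) (by omega) (by omega)
    rw [Finset.mem_filter, Finset.mem_Icc]
    refine ⟨by omega, ⟨_, w0⟩, ?_⟩
    rintro ⟨i, hi⟩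
    exact kwit_star k j i hj.1 (hi _ w0.1 w0.2.1 w0.2.2) (hi _ w1.1 w1.2.1 w1.2.2)
      (hi _ w2.1 w2.2.1 w2.2.2)
  refine ⟨kcol k, hA, ?_, hC, ?_⟩
  · intro S T hS hT hcS hcT hd he
    have g1 := kcol_good n k hk S hS hcS
    have g2 := kcol_good n k hk T hT hcT
    rw [← he] at g2
    exact kgood_disj k _ S T hd g1 g2
  · have hsum := Finset.card_le_card (Finset.union_subset
      (Finset.filter_subset (fun ℓ =>
        (∃ S : Finset ℕ, S ⊆ Finset.Icc 1 n ∧ S.card = k ∧ kcol k S = ℓ) ∧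
        ¬ ∃ i : ℕ, ∀ S : Finset ℕ, S ⊆ Finset.Icc 1 n → S.card = k →
          kcol k S = ℓ → i ∈ S) (Finset.Icc 1 (n - 2 * k + 2)))
      (Finset.filter_subset (fun ℓ =>
        (∃ S : Finset ℕ, S ⊆ Finset.Icc 1 n ∧ S.card = k ∧ kcol k S = ℓ) ∧
        ∃ i : ℕ, ∀ S : Finset ℕ, S ⊆ Finset.Icc 1 n → S.card = k →
          kcol k S = ℓ → i ∈ S) (Finset.Icc 1 (n - 2 * k + 2))))
    rw [Finset.card_union_of_disjoint, Nat.card_Icc] at hsum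
    · omega
    · rw [Finset.disjoint_filter]
      intro x _ h1 h2
      exact h1.2 h2.2
end

section
/- Let k ≥ 1 and suppose [n] is partitioned into pairwise disjoint nonempty sets T₁, …, T_{n−2k+2}, each of odd cardinality. Then the map c assigning to each k-element subset S of [n] the least index i such that |S ∩ T_i| > |T_i|/2 is well-defined (such an i exists when each |T_i| is either 1 or 3 and exactly k−1 of the T_i have size 3), and c is a proper (n−2k+2)-coloring of the (n,k)-Kneser graph. -/
/-- Let `k ≥ 1`, `n ≥ 2k`, and suppose `[n] = {1,…,n}` is partitioned into pairwise
disjoint nonempty sets `T_1, …, T_{n-2k+2}`, each of odd cardinality.  Then for every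
`k`-subset `S` of `[n]` there is an index `i` with `|S ∩ T_i| > |T_i|/2` (so the map
`c` sending `S` to the least such `i` is well-defined), and any such map `c` is a
proper `(n-2k+2)`-coloring of the `(n,k)`-Kneser graph. -/
theorem majority_coloring (n k : ℕ) (hk : 1 ≤ k) (hn : 2 * k ≤ n)
    (T : ℕ → Finset ℕ)
    (hne : ∀ i ∈ Finset.Icc 1 (n - 2 * k + 2), (T i).Nonempty)
    (hodd : ∀ i ∈ Finset.Icc 1 (n - 2 * k + 2), Odd (T i).card)
    (hdisj : ∀ i ∈ Finset.Icc 1 (n - 2 * k + 2), ∀ j ∈ Finset.Icc 1 (n - 2 * k + 2),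
      i ≠ j → Disjoint (T i) (T j))
    (hcover : (Finset.Icc 1 (n - 2 * k + 2)).biUnion T = Finset.Icc 1 n) :
    (∀ S : Finset ℕ, S ⊆ Finset.Icc 1 n → S.card = k →
      ∃ i ∈ Finset.Icc 1 (n - 2 * k + 2), (T i).card < 2 * (S ∩ T i).card) ∧
    ∀ c : Finset ℕ → ℕ,
      (∀ S : Finset ℕ, S ⊆ Finset.Icc 1 n → S.card = k →
        c S ∈ Finset.Icc 1 (n - 2 * k + 2) ∧
        (T (c S)).card < 2 * (S ∩ T (c S)).card ∧
        ∀ j ∈ Finset.Icc 1 (n - 2 * k + 2), j < c S →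
          ¬ ((T j).card < 2 * (S ∩ T j).card)) →
      ∀ S₁ S₂ : Finset ℕ, S₁ ⊆ Finset.Icc 1 n → S₂ ⊆ Finset.Icc 1 n →
        S₁.card = k → S₂.card = k → Disjoint S₁ S₂ → c S₁ ≠ c S₂ := by
  constructor
  · intro S hS hSk
    by_contra hcon
    have hcon' : ∀ i ∈ Finset.Icc 1 (n - 2 * k + 2), 2 * (S ∩ T i).card + 1 ≤ (T i).card := by
      intro i hi
      have h1 : ¬ (T i).card < 2 * (S ∩ T i).card := fun h => hcon ⟨i, hi, h⟩
      obtain ⟨m, hm⟩ := hodd i hi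
      omega
    have hsumT : ∑ i ∈ Finset.Icc 1 (n - 2 * k + 2), (T i).card = n := by
      rw [← Finset.card_biUnion hdisj, hcover, Nat.card_Icc]
      omega
    have hsumS : ∑ i ∈ Finset.Icc 1 (n - 2 * k + 2), (S ∩ T i).card = k := by
      rw [← Finset.card_biUnion, ← Finset.inter_biUnion, hcover,
        Finset.inter_eq_left.mpr hS, hSk]
      intro i hi j hj hij
      exact (hdisj i hi j hj hij).mono Finset.inter_subset_right Finset.inter_subset_right
    have h := Finset.sum_le_sum hcon'
    rw [Finset.sum_add_distrib, ← Finset.mul_sum, hsumT, hsumS, Finset.sum_const,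
      Nat.card_Icc, smul_eq_mul] at h
    omega
  · intro c hc S₁ S₂ h₁ h₂ k₁ k₂ hd heq
    obtain ⟨-, a, -⟩ := hc S₁ h₁ k₁
    obtain ⟨-, b, -⟩ := hc S₂ h₂ k₂
    rw [← heq] at b
    have hdd : Disjoint (S₁ ∩ T (c S₁)) (S₂ ∩ T (c S₁)) :=
      hd.mono Finset.inter_subset_left Finset.inter_subset_left
    have hle : (S₁ ∩ T (c S₁) ∪ S₂ ∩ T (c S₁)).card ≤ (T (c S₁)).card :=
      Finset.card_le_card
        (Finset.union_subset Finset.inter_subset_right Finset.inter_subset_right)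
    rw [Finset.card_union_of_disjoint hdd] at hle
    omega
end
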